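/- For every n=(n₁,n₂,n₃)∈ℤ³ with all nᵢ≥1 and every pair of triangles △ and △' of the three-directional grid G, the span of the restrictions to △ of the box spline translates active on △ equals (as a subspace of bivariate polynomials of total degree ≤ n₁+n₂+n₃−2) the span of the restrictions to △' of the translates active on △'; hence the polynomial space V_n = span(B_n(△̂)|_△) is independent of the choice of triangle △. -/

import Mathlib

/- ## The three-directional (type-I) grid -/

noncomputable section

open MvPolynomial Set Function

/-- Points of the plane. -/
abbrev Pt := ℝ × ℝ

/-- Bivariate real polynomials `ℝ[x,y]`. -/
abbrev BPoly := MvPolynomial (Fin 2) ℝ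

/-- Evaluation of a bivariate polynomial at a point of the plane. -/
def evalP (q : BPoly) (p : Pt) : ℝ := MvPolynomial.eval ![p.1, p.2] q

/-- Triangles of the three-directional grid `G`:  `⟨v, false⟩` is the "lower"
triangle with vertices `v, v+(1,0), v+(1,1)`, and `⟨v, true⟩` is the "upper"
triangle with vertices `v, v+(0,1), v+(1,1)`. -/
structure Tri where
  v : ℤ × ℤ
  up : Bool
deriving DecidableEq

namespace Tri

/-- The open triangle in the plane realizing a combinatorial triangle. -/
def toSet (T : Tri) : Set Pt :=
  if T.up then
    {p | (T.v.1 : ℝ) < p.1 ∧ p.1 - (T.v.1 : ℝ) < p.2 - (T.v.2 : ℝ) ∧ p.2 < (T.v.2 : ℝ) + 1}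
  else
    {p | (T.v.2 : ℝ) < p.2 ∧ p.2 - (T.v.2 : ℝ) < p.1 - (T.v.1 : ℝ) ∧ p.1 < (T.v.1 : ℝ) + 1}

/-- The closed triangle. -/
def cl (T : Tri) : Set Pt := closure T.toSet

/-- The three lattice vertices of a triangle. -/
def vertices (T : Tri) : Finset (ℤ × ℤ) :=
  if T.up then {T.v, (T.v.1, T.v.2 + 1), (T.v.1 + 1, T.v.2 + 1)}
  else {T.v, (T.v.1 + 1, T.v.2), (T.v.1 + 1, T.v.2 + 1)}

end Tri

/-- Edges of the grid: a lattice point together with a direction type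
(`0 ↦ e₁ = (1,0)`, `1 ↦ e₂ = (0,1)`, `2 ↦ e₃ = (1,1)`); the edge of type `i`
at `v` joins `v` to `v + eᵢ`. -/
abbrev Edge := (ℤ × ℤ) × Fin 3

/-- The three direction vectors `e₁, e₂, e₃`. -/
def dirZ : Fin 3 → ℤ × ℤ := ![(1, 0), (0, 1), (1, 1)]

/-- The three edges of a triangle. -/
def Tri.edges (T : Tri) : Finset Edge :=
  if T.up then {((T.v.1, T.v.2 + 1), 0), (T.v, 1), (T.v, 2)}
  else {(T.v, 0), ((T.v.1 + 1, T.v.2), 1), (T.v, 2)}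

/-- The open segment realizing an edge. -/
def Edge.seg (ε : Edge) : Set Pt :=
  {p | ∃ t : ℝ, 0 < t ∧ t < 1 ∧
    p = ((ε.1.1 : ℝ) + t * ((dirZ ε.2).1 : ℝ), (ε.1.2 : ℝ) + t * ((dirZ ε.2).2 : ℝ))}

/-- `M*`: the union of the closed triangles of a multicell domain. -/
def Mstar (M : Finset Tri) : Set Pt := ⋃ T ∈ M, T.cl

/-- `ℙ(M,V)`: continuous functions on `M*` whose restriction to each triangle
of `M` is the restriction of a polynomial in `V`. -/
def PP (M : Finset Tri) (V : Set BPoly) : Set (Pt → ℝ) :=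
  {f | ContinuousOn f (Mstar M) ∧ ∀ T ∈ M, ∃ q ∈ V, EqOn f (evalP q) T.toSet}

/-- The diamond of an edge: union of the closed triangles of `M` having `ε`
as an edge. -/
def diamond (M : Finset Tri) (ε : Edge) : Set Pt :=
  ⋃ T ∈ M.filter (fun T => ε ∈ T.edges), T.cl

/-- The spline space with edge smoothness `d` on the multicell domain `M`:
piecewise polynomials (pieces from `V`) which are `C^{dᵢ}` on the diamond of
every edge of type `i` of `M`. -/
def SplineSpace (M : Finset Tri) (V : Set BPoly) (d : Fin 3 → ℕ) : Set (Pt → ℝ) :=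
  {f | f ∈ PP M V ∧
    ∀ ε : Edge, (∃ T ∈ M, ε ∈ T.edges) → ContDiffOn ℝ (d ε.2) f (diamond M ε)}

/-- Directional derivative of a polynomial along an integer vector. -/
def dirD (e : ℤ × ℤ) (q : BPoly) : BPoly :=
  (e.1 : ℝ) • MvPolynomial.pderiv (0 : Fin 2) q + (e.2 : ℝ) • MvPolynomial.pderiv (1 : Fin 2) q

/-- The mixed directional derivative operator
`D_s = (∂_{e₁})^{s₁} (∂_{e₂})^{s₂} (∂_{e₃})^{s₃}`. -/
def Dmix (s : Fin 3 → ℕ) (q : BPoly) : BPoly :=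
  (dirD (dirZ 0))^[s 0] ((dirD (dirZ 1))^[s 1] ((dirD (dirZ 2))^[s 2] q))

/-- The index sets `Iᵢ^d`; `I₁^d = {s | s₂+s₃ ≤ d₁}` and cyclically. -/
def Iset (d : Fin 3 → ℕ) (i : Fin 3) : Set (Fin 3 → ℕ) :=
  {s | s (i + 1) + s (i + 2) ≤ d i}

/-- Two triangles of the grid are adjacent if they are distinct and share an edge. -/
def Adj (T T' : Tri) : Prop := T ≠ T' ∧ ∃ ε : Edge, ε ∈ T.edges ∧ ε ∈ T'.edges

/-- `c` is an edge-connected chain of length `m` from `T` to `T'`. -/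
def TriIsChain (T T' : Tri) (m : ℕ) (c : ℕ → Tri) : Prop :=
  c 0 = T ∧ c m = T' ∧ ∀ k < m, Adj (c k) (c (k + 1))

/-- The set of types of the edges crossed by a chain. -/
def chainTypes (m : ℕ) (c : ℕ → Tri) : Set (Fin 3) :=
  {i | ∃ k < m, ∃ ε : Edge, ε.2 = i ∧ ε ∈ (c k).edges ∧ ε ∈ (c (k + 1)).edges}

/-- Minimal length of an edge-connected chain between two triangles. -/
def minLen (T T' : Tri) : ℕ := sInf {m | ∃ c, TriIsChain T T' m c}

/-- The smoothness type `SmType(△,△')`: the types of the edges crossed by a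
shortest edge-connected chain from `△` to `△'`. -/
def SmType (T T' : Tri) : Set (Fin 3) :=
  {i | ∃ c, TriIsChain T T' (minLen T T') c ∧ i ∈ chainTypes (minLen T T') c}

/-- `q` is the polynomial piece of `f` on the triangle `T`. -/
def IsPiece (f : Pt → ℝ) (T : Tri) (q : BPoly) : Prop := EqOn f (evalP q) T.toSet

/-- The strongly regular spline space `Ŝ^d(M,V)`: piecewise polynomials such
that for any two triangles of `M` with intersecting closures, the derivatives
`D_s`, `s ∈ ⋂_{i ∈ SmType(△,△')} Iᵢ^d`, of the two polynomial pieces agree on the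
intersection of the closures (i.e. `D_s f` is continuous there). -/
def StrongSpline (M : Finset Tri) (V : Set BPoly) (d : Fin 3 → ℕ) : Set (Pt → ℝ) :=
  {f | f ∈ PP M V ∧
    ∀ T ∈ M, ∀ T' ∈ M, (T.cl ∩ T'.cl).Nonempty →
      ∀ s : Fin 3 → ℕ, (∀ i ∈ SmType T T', s ∈ Iset d i) →
        ∀ q q' : BPoly, IsPiece f T q → IsPiece f T' q' →
          ∀ x ∈ T.cl ∩ T'.cl, evalP (Dmix s q) x = evalP (Dmix s q') x}

/-- Kissing triangles: the closures intersect in exactly one point. -/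
def Kissing (T T' : Tri) : Prop := ∃ p : Pt, T.cl ∩ T'.cl = {p}

/-- An over-concave vertex of `M`: exactly one triangle of `star(ν)` is
missing from `M`. -/
def OverConcave (M : Finset Tri) (ν : ℤ × ℤ) : Prop :=
  ∃! T : Tri, ν ∈ T.vertices ∧ T ∉ M

/- ## Type-I box splines -/

/-- The Courant hat function `B_{(1,1,1)}`: the piecewise linear function on
`G` supported on `star((1,1))` with value `1` at `(1,1)` and `0` at all other
lattice points. -/
def hat (p : Pt) : ℝ :=
  max 0 (min (min (min p.1 p.2) (min (2 - p.1) (2 - p.2)))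
             (min (1 - (p.1 - p.2)) (1 + (p.1 - p.2))))

/-- The type-I box spline `B_{(n₁,n₂,n₃)}`, defined by repeated directional
convolution starting from the Courant hat function (the result is independent
of the order of the convolutions); junk value `0` if some `nᵢ = 0`. -/
noncomputable def boxN : ℕ → ℕ → ℕ → Pt → ℝ
  | 0, _, _, _ => 0
  | _ + 1, 0, _, _ => 0
  | _ + 1, _ + 1, 0, _ => 0
  | 1, 1, 1, p => hat p
  | a + 2, b + 1, c + 1, p =>
      ∫ t in (0:ℝ)..1, boxN (a + 1) (b + 1) (c + 1) (p.1 - t, p.2)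
  | 1, b + 2, c + 1, p =>
      ∫ t in (0:ℝ)..1, boxN 1 (b + 1) (c + 1) (p.1, p.2 - t)
  | 1, 1, c + 2, p =>
      ∫ t in (0:ℝ)..1, boxN 1 1 (c + 1) (p.1 - t, p.2 - t)
  termination_by a b c _ => a + b + c
  decreasing_by all_goals omega

/-- The translate `B_n(· - w)` of the box spline. -/
def trBox (n₁ n₂ n₃ : ℕ) (w : ℤ × ℤ) (p : Pt) : ℝ :=
  boxN n₁ n₂ n₃ (p.1 - (w.1 : ℝ), p.2 - (w.2 : ℝ))

/-- `Supp_n(△̂)`: lattice translates of `B_n` that do not vanish identically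
on the triangle `T`. -/
def activeSet (n₁ n₂ n₃ : ℕ) (T : Tri) : Set (ℤ × ℤ) :=
  {w | ¬ ∀ p ∈ T.toSet, trBox n₁ n₂ n₃ w p = 0}

/-- `c` is the coefficient vector of the polynomial `q` with respect to the
active box-spline translates on `T`:  `q|_T = Σ_β λ_T^β(q)·β|_T`. -/
def Represents (n₁ n₂ n₃ : ℕ) (T : Tri) (q : BPoly) (c : (ℤ × ℤ) →₀ ℝ) : Prop :=
  ↑c.support ⊆ activeSet n₁ n₂ n₃ T ∧
    ∀ p ∈ T.toSet, evalP q p = c.sum fun w a => a * trBox n₁ n₂ n₃ w p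

/-- `V_n` (relative to the triangle `T`): polynomials whose restriction to `T`
is a linear combination of the active box-spline translates on `T`. -/
def VSpace (n₁ n₂ n₃ : ℕ) (T : Tri) : Set BPoly :=
  {q | ∃ c, Represents n₁ n₂ n₃ T q c}


open MeasureTheory Topology

/-! ### Directional averaging operators -/

def eR (i : Fin 3) : Pt := (((dirZ i).1 : ℝ), ((dirZ i).2 : ℝ))

lemma eR0 : eR 0 = (1, 0) := by simp [eR, dirZ]
lemma eR1 : eR 1 = (0, 1) := by simp [eR, dirZ]
lemma eR2 : eR 2 = (1, 1) := by simp [eR, dirZ]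

lemma norm_eR_le (i : Fin 3) : ‖eR i‖ ≤ 1 := by
  fin_cases i <;> simp [eR, dirZ, Prod.norm_def]

def II (i : Fin 3) : C(Pt, ℝ) →ₗ[ℝ] C(Pt, ℝ) where
  toFun f := ⟨fun p => ∫ t in (0:ℝ)..1, f (p - t • eR i), by
    apply intervalIntegral.continuous_parametric_intervalIntegral_of_continuous'
    fun_prop⟩
  map_add' f g := by
    ext p
    simp only [ContinuousMap.coe_mk, ContinuousMap.add_apply]
    apply intervalIntegral.integral_add <;>
    · apply Continuous.intervalIntegrable; fun_prop
  map_smul' a f := by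
    ext p
    simp

lemma II_apply (i : Fin 3) (f : C(Pt, ℝ)) (p : Pt) :
    II i f p = ∫ t in (0:ℝ)..1, f (p - t • eR i) := rfl

lemma II_comm (i j : Fin 3) (f : C(Pt, ℝ)) : II i (II j f) = II j (II i f) := by
  ext p
  simp only [II_apply]
  simp only [intervalIntegral.integral_of_le zero_le_one]
  rw [MeasureTheory.integral_integral_swap]
  · congr 1; ext t; congr 1; ext s
    congr 1; abel
  · have hc : Continuous (uncurry fun s t : ℝ => f (p - s • eR i - t • eR j)) := by
      unfold uncurry; fun_prop
    rw [Measure.prod_restrict]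
    apply IntegrableOn.mono_set (t := Icc 0 1 ×ˢ Icc 0 1)
    · exact hc.continuousOn.integrableOn_compact (isCompact_Icc.prod isCompact_Icc)
    · exact Set.prod_mono Ioc_subset_Icc_self Ioc_subset_Icc_self

lemma II_commute (i j : Fin 3) : Commute (II i : Module.End ℝ C(Pt, ℝ)) (II j) :=
  LinearMap.ext fun f => II_comm i j f

def op (m : Fin 3 → ℕ) : Module.End ℝ C(Pt, ℝ) :=
  (II 0 : Module.End ℝ C(Pt, ℝ)) ^ m 0 * (II 1 : Module.End ℝ C(Pt, ℝ)) ^ m 1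
    * (II 2 : Module.End ℝ C(Pt, ℝ)) ^ m 2

lemma op_zero : op 0 = 1 := by simp [op]

lemma op_succ (m : Fin 3 → ℕ) (i : Fin 3) (f : C(Pt, ℝ)) :
    op (m + Pi.single i 1) f = II i (op m f) := by
  suffices h : op (m + Pi.single i 1) = II i * op m by rw [h]; rfl
  have h01 := ((II_commute 0 1).pow_left (m 0)).eq
  have h02 := ((II_commute 0 2).pow_left (m 0)).eq
  have h12 := ((II_commute 1 2).pow_left (m 1)).eq
  fin_cases i
  · simp [op, pow_succ', mul_assoc]
  · simp only [op]
    simp [pow_succ']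
    simp only [← mul_assoc]
    rw [h01]
  · simp [op, pow_succ']
    simp only [← mul_assoc]
    rw [← h02]
    simp only [mul_assoc]
    rw [← mul_assoc (II 2 : Module.End ℝ C(Pt, ℝ)), ← h12]
    simp only [mul_assoc]

/-- translation -/
def tau (v : Pt) (f : C(Pt, ℝ)) : C(Pt, ℝ) := f.comp ⟨fun p => p - v, by fun_prop⟩

lemma tau_apply (v : Pt) (f : C(Pt, ℝ)) (p : Pt) : tau v f p = f (p - v) := rfl

lemma II_tau (i : Fin 3) (v : Pt) (f : C(Pt, ℝ)) : II i (tau v f) = tau v (II i f) := by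
  ext p
  simp only [II_apply, tau_apply]
  congr 1; ext t; congr 1; abel

lemma ind_m {P : (Fin 3 → ℕ) → Prop} (h0 : P 0) (hs : ∀ m i, P m → P (m + Pi.single i 1)) :
    ∀ m, P m := by
  intro m
  induction hk : m 0 + m 1 + m 2 generalizing m with
  | zero =>
    have : m = 0 := by
      ext i; fin_cases i <;> simp <;> omega
    rw [this]; exact h0
  | succ k ih =>
    have key : ∀ i, m i ≠ 0 → ∃ m' : Fin 3 → ℕ, m = m' + Pi.single i 1 := by
      intro i hi
      refine ⟨m - Pi.single i 1, ?_⟩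
      ext j
      by_cases hj : j = i
      · subst hj; simp; omega
      · simp [hj]
    have : ∃ i, m i ≠ 0 := by
      by_contra! h
      have := h 0; have := h 1; have := h 2; omega
    obtain ⟨i, hi⟩ := this
    obtain ⟨m', rfl⟩ := key i hi
    apply hs
    apply ih
    fin_cases i <;> simp at hk ⊢ <;> omega

lemma exists_pred (m : Fin 3 → ℕ) (i : Fin 3) (hi : m i ≠ 0) :
    ∃ m' : Fin 3 → ℕ, m = m' + Pi.single i 1 := by
  refine ⟨m - Pi.single i 1, ?_⟩
  ext j
  by_cases hj : j = i
  · subst hj; simp; omega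
  · simp [hj]

lemma op_tau (m : Fin 3 → ℕ) (v : Pt) (f : C(Pt, ℝ)) : op m (tau v f) = tau v (op m f) := by
  induction m using ind_m with
  | h0 => simp [op_zero]
  | hs m i ih => rw [op_succ, op_succ, ih, II_tau]

lemma II_line (i : Fin 3) (f : C(Pt, ℝ)) (p : Pt) :
    HasLineDerivAt ℝ (II i f) (f p - f (p - eR i)) p (eR i) := by
  unfold HasLineDerivAt
  have h1 : (fun t : ℝ => II i f (p + t • eR i)) =
      fun t : ℝ => (∫ s in (0:ℝ)..t, f (p + s • eR i)) -
        ∫ s in (0:ℝ)..(t - 1), f (p + s • eR i) := by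
    ext t
    rw [intervalIntegral.integral_interval_sub_left]
    · rw [II_apply]
      have := intervalIntegral.integral_comp_sub_left (a := 0) (b := 1)
        (fun s => f (p + s • eR i)) t
      rw [sub_zero] at this
      rw [← this]
      congr 1; ext s; congr 1
      rw [sub_smul]; abel
    all_goals apply Continuous.intervalIntegrable; fun_prop
  rw [h1]
  have hc : Continuous fun s : ℝ => f (p + s • eR i) := by fun_prop
  have h2 := (hc.integral_hasStrictDerivAt 0 0).hasDerivAt
  have h3 := (hc.integral_hasStrictDerivAt 0 (0 - 1)).hasDerivAt
  have h4 := HasDerivAt.comp_sub_const (0:ℝ) 1 h3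
  have := h2.sub h4
  rw [zero_smul, add_zero, zero_sub, neg_one_smul, ← sub_eq_add_neg] at this
  exact this

/-! ### hat splines -/

lemma hat_cont : Continuous hat := by unfold hat; fun_prop

def hatC : C(Pt, ℝ) := ⟨hat, hat_cont⟩

def zR (w : ℤ × ℤ) : Pt := ((w.1 : ℝ), (w.2 : ℝ))

def hatT (w : ℤ × ℤ) : C(Pt, ℝ) := tau (zR w) hatC

lemma hatT_apply (w : ℤ × ℤ) (p : Pt) : hatT w p = hat (p.1 - w.1, p.2 - w.2) := rfl

lemma hatT_ne {w : ℤ × ℤ} {p : Pt} (h : hatT w p ≠ 0) :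
    (w.1 : ℝ) < p.1 ∧ p.1 < w.1 + 2 ∧ (w.2 : ℝ) < p.2 ∧ p.2 < w.2 + 2 := by
  rw [hatT_apply] at h
  unfold hat at h
  have h' : 0 < (min (min (min (p.1 - w.1) (p.2 - w.2)) (min (2 - (p.1 - w.1)) (2 - (p.2 - w.2))))
             (min (1 - ((p.1 - w.1) - (p.2 - w.2))) (1 + ((p.1 - w.1) - (p.2 - w.2))))) := by
    by_contra hh
    push Not at hh
    exact h (max_eq_left hh)
  simp only [lt_min_iff] at h'
  obtain ⟨⟨⟨a, b⟩, c, d⟩, -⟩ := h'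
  refine ⟨?_, ?_, ?_, ?_⟩ <;> linarith

def boxS (R : ℤ) : Finset (ℤ × ℤ) := Finset.Icc (-R) R ×ˢ Finset.Icc (-R) R

lemma mem_boxS {R : ℤ} {w : ℤ × ℤ} : w ∈ boxS R ↔ (-R ≤ w.1 ∧ w.1 ≤ R) ∧ (-R ≤ w.2 ∧ w.2 ≤ R) := by
  simp [boxS]

lemma hatT_box {R : ℝ} {K : ℤ} (hK : R + 2 ≤ K) {p : Pt} (hp : ‖p‖ ≤ R) {w : ℤ × ℤ}
    (h : hatT w p ≠ 0) : w ∈ boxS K := by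
  obtain ⟨a, b, c, d⟩ := hatT_ne h
  have h1 : |p.1| ≤ R := (norm_fst_le p).trans hp
  have h2 : |p.2| ≤ R := (norm_snd_le p).trans hp
  rw [abs_le] at h1 h2
  rw [mem_boxS]
  refine ⟨⟨?_, ?_⟩, ?_, ?_⟩ <;>
  · have : ∀ a b : ℤ, (a : ℝ) ≤ b → a ≤ b := fun a b h => by exact_mod_cast h
    apply this; push_cast; linarith

lemma hatT_lf (c : ℤ × ℤ → ℝ) : LocallyFinite fun w => support fun p => c w * hatT w p := by
  intro p
  refine ⟨Metric.ball p 1, Metric.ball_mem_nhds p one_pos, ?_⟩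
  obtain ⟨K, hK⟩ := exists_int_gt (‖p‖ + 1 + 2)
  apply (boxS K).finite_toSet.subset
  rintro w ⟨x, hx, hxb⟩
  apply hatT_box (R := ‖p‖ + 1) hK.le (p := x)
  · have := norm_sub_norm_le x p
    rw [Metric.mem_ball, dist_eq_norm] at hxb
    linarith
  · exact right_ne_zero_of_mul hx

def S0 (c : ℤ × ℤ → ℝ) : C(Pt, ℝ) :=
  ⟨fun p => ∑ᶠ w, c w * hatT w p,
    continuous_finsum (fun w => by fun_prop) (hatT_lf c)⟩

lemma S0_apply (c : ℤ × ℤ → ℝ) (p : Pt) : S0 c p = ∑ᶠ w, c w * hatT w p := rfl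

lemma S0_eq_sum (c : ℤ × ℤ → ℝ) (p : Pt) (s : Finset (ℤ × ℤ))
    (hs : ∀ w, hatT w p ≠ 0 → w ∈ s) : S0 c p = ∑ w ∈ s, c w * hatT w p := by
  rw [S0_apply]
  apply finsum_eq_sum_of_support_subset
  intro w hw
  exact hs w (right_ne_zero_of_mul hw)

def S (m : Fin 3 → ℕ) (c : ℤ × ℤ → ℝ) : C(Pt, ℝ) := op m (S0 c)

lemma S_succ (m : Fin 3 → ℕ) (i : Fin 3) (c : ℤ × ℤ → ℝ) :
    S (m + Pi.single i 1) c = II i (S m c) := op_succ _ _ _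

def nab (i : Fin 3) (c : ℤ × ℤ → ℝ) : ℤ × ℤ → ℝ := fun w => c w - c (w - dirZ i)

lemma S0_shift (c : ℤ × ℤ → ℝ) (v : ℤ × ℤ) (p : Pt) :
    S0 c (p - zR v) = S0 (fun w => c (w - v)) p := by
  rw [S0_apply, S0_apply]
  rw [← finsum_comp_equiv (Equiv.subRight v)]
  apply finsum_congr
  intro w
  simp only [Equiv.subRight_apply]
  rw [hatT_apply, hatT_apply]
  congr 2
  ext <;> simp [zR]

lemma fin_hat (p : Pt) (c : ℤ × ℤ → ℝ) : (support fun w => c w * hatT w p).Finite := by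
  obtain ⟨K, hK⟩ := exists_int_gt (‖p‖ + 2)
  apply (boxS K).finite_toSet.subset
  intro w hw
  exact hatT_box hK.le le_rfl (right_ne_zero_of_mul hw)

lemma S0_sub (c d : ℤ × ℤ → ℝ) : S0 (c - d) = S0 c - S0 d := by
  ext p
  simp only [ContinuousMap.sub_apply, S0_apply]
  rw [← finsum_sub_distrib (fin_hat p c) (fin_hat p d)]
  apply finsum_congr
  intro w; simp [sub_mul]

lemma S0_add (c d : ℤ × ℤ → ℝ) : S0 (c + d) = S0 c + S0 d := by
  ext p
  simp only [ContinuousMap.add_apply, S0_apply]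
  rw [← finsum_add_distrib (fin_hat p c) (fin_hat p d)]
  apply finsum_congr
  intro w; simp [add_mul]

lemma S_add (m : Fin 3 → ℕ) (c d : ℤ × ℤ → ℝ) : S m (c + d) = S m c + S m d := by
  simp [S, S0_add]

lemma S_sub (m : Fin 3 → ℕ) (c d : ℤ × ℤ → ℝ) : S m (c - d) = S m c - S m d := by
  simp [S, S0_sub]

lemma S_nab (m : Fin 3 → ℕ) (i : Fin 3) (c : ℤ × ℤ → ℝ) (p : Pt) :
    S m (nab i c) p = S m c p - S m c (p - eR i) := by
  have h : S0 (nab i c) = S0 c - tau (eR i) (S0 c) := by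
    have : nab i c = c - fun w => c (w - dirZ i) := rfl
    rw [this, S0_sub]
    ext p
    simp only [ContinuousMap.sub_apply, tau_apply]
    rw [← S0_shift]
    rfl
  rw [S, h, map_sub, op_tau]
  rfl

lemma S_line (m : Fin 3 → ℕ) (i : Fin 3) (c : ℤ × ℤ → ℝ) (p : Pt) :
    HasLineDerivAt ℝ (S (m + Pi.single i 1) c) (S m (nab i c) p) p (eR i) := by
  rw [S_succ, S_nab]
  exact II_line i _ p

lemma S_loc (m : Fin 3 → ℕ) : ∀ R : ℝ, ∃ s : Finset (ℤ × ℤ), ∀ s', s ⊆ s' → ∀ c, ∀ p : Pt, ‖p‖ ≤ R →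
    S m c p = ∑ w ∈ s', c w * op m (hatT w) p := by
  induction m using ind_m with
  | h0 =>
    intro R
    obtain ⟨K, hK⟩ := exists_int_gt (R + 2)
    refine ⟨boxS K, fun s' hs c p hp => ?_⟩
    simp only [S, op_zero, Module.End.one_apply]
    exact S0_eq_sum c p s' fun w hw => hs (hatT_box hK.le hp hw)
  | hs m i ih =>
    intro R
    obtain ⟨s, hs⟩ := ih (R + 1)
    refine ⟨s, fun s' hss c p hp => ?_⟩
    have h1 : II i (S m c) p = II i (∑ w ∈ s', c w • op m (hatT w)) p := by
      simp only [II_apply]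
      apply intervalIntegral.integral_congr
      intro t ht
      rw [uIcc_of_le zero_le_one] at ht
      simp only
      rw [hs s' hss c]
      · simp
      · calc ‖p - t • eR i‖ ≤ ‖p‖ + ‖t • eR i‖ := norm_sub_le _ _
          _ ≤ R + 1 := by
            rw [norm_smul, Real.norm_eq_abs, abs_of_nonneg ht.1]
            have := norm_eR_le i
            have := mul_le_one₀ ht.2 (norm_nonneg _) this
            linarith
    rw [S_succ, h1, map_sum]
    simp [op_succ]


/-! ### Polynomial side -/

lemma evalP_add (p q : BPoly) (x : Pt) : evalP (p + q) x = evalP p x + evalP q x := by simp [evalP]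
lemma evalP_sub (p q : BPoly) (x : Pt) : evalP (p - q) x = evalP p x - evalP q x := by simp [evalP]
lemma evalP_zero (x : Pt) : evalP 0 x = 0 := by simp [evalP]
lemma evalP_C (a : ℝ) (x : Pt) : evalP (C a) x = a := by simp [evalP]
lemma evalP_smul (a : ℝ) (p : BPoly) (x : Pt) : evalP (a • p) x = a * evalP p x := by simp [evalP]

def DD (i : Fin 3) : Derivation ℝ BPoly BPoly :=
  ((dirZ i).1 : ℝ) • pderiv (0 : Fin 2) + ((dirZ i).2 : ℝ) • pderiv (1 : Fin 2)

def DL (i : Fin 3) : Module.End ℝ BPoly := (DD i : BPoly →ₗ[ℝ] BPoly)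

lemma DL_apply (i : Fin 3) (q : BPoly) : DL i q = DD i q := rfl

lemma DD0 : DD 0 = pderiv 0 := by simp [DD, dirZ]
lemma DD1 : DD 1 = pderiv 1 := by simp [DD, dirZ]
lemma DD2 : DD 2 = pderiv 0 + pderiv 1 := by simp [DD, dirZ]

lemma DD_X (i : Fin 3) (k : Fin 2) : ∃ a : ℝ, DD i (X k) = C a := by
  refine ⟨if k = 0 then (dirZ i).1 else (dirZ i).2, ?_⟩
  fin_cases k <;> simp [DD, pderiv_X, smul_eq_C_mul]

lemma DL_comm (i j : Fin 3) : Commute (DL i) (DL j) := by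
  have h : ⁅DD i, DD j⁆ = 0 := by
    apply derivation_ext
    intro k
    rw [Derivation.commutator_apply]
    obtain ⟨a, ha⟩ := DD_X i k
    obtain ⟨b, hb⟩ := DD_X j k
    simp [ha, hb]
  apply LinearMap.ext
  intro q
  have := congrArg (fun D : Derivation ℝ BPoly BPoly => D q) h
  simp only [Derivation.commutator_apply] at this
  exact sub_eq_zero.mp this

lemma evalP_line (q : BPoly) (i : Fin 3) (p : Pt) :
    HasLineDerivAt ℝ (evalP q) (evalP (DL i q) p) p (eR i) := by
  unfold HasLineDerivAt
  induction q using MvPolynomial.induction_on with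
  | C a => simp [evalP, DL_apply, hasDerivAt_const]
  | add q r hq hr =>
    simp only [map_add, evalP_add]
    exact hq.add hr
  | mul_X q k hq =>
    have hX : HasDerivAt (fun t : ℝ => evalP (X k) (p + t • eR i)) (evalP (DL i (X k)) p) 0 := by
      have h1 : HasDerivAt (fun t : ℝ => t) 1 0 := hasDerivAt_id 0
      fin_cases k
      · have := (h1.mul_const (eR i).1).const_add p.1
        simpa [evalP, DL_apply, DD, pderiv_X, eR] using this
      · have := (h1.mul_const (eR i).2).const_add p.2
        simpa [evalP, DL_apply, DD, pderiv_X, eR] using this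
    have := hq.mul hX
    have e : ∀ a b x, evalP (a * b) x = evalP a x * evalP b x := fun a b x => by simp [evalP]
    rw [DL_apply, Derivation.leibniz]
    simp only [smul_eq_mul, evalP_add, e]
    rw [zero_smul, add_zero] at this
    refine this.congr_deriv ?_
    rw [DL_apply, DL_apply]; ring

lemma evalP_cont (q : BPoly) : Continuous (evalP q) := by
  unfold evalP
  apply (MvPolynomial.continuous_eval q).comp
  apply continuous_pi
  intro i
  fin_cases i
  · exact continuous_fst
  · exact continuous_snd

lemma poly_ext_open {U : Set Pt} (hU : IsOpen U) (hne : U.Nonempty) {q r : BPoly}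
    (h : EqOn (evalP q) (evalP r) U) : q = r := by
  obtain ⟨p, hp⟩ := hne
  obtain ⟨ε, hε, hb⟩ := Metric.isOpen_iff.mp hU p hp
  apply MvPolynomial.funext_set (fun k : Fin 2 => Metric.ball (![p.1, p.2] k) ε)
  · intro k
    rw [Real.ball_eq_Ioo]
    apply Ioo_infinite; linarith
  · intro x hx
    have h0 := hx 0 (mem_univ _)
    have h1 := hx 1 (mem_univ _)
    have hm : (x 0, x 1) ∈ U := by
      apply hb
      rw [← ball_prod_same]
      exact ⟨by simpa using h0, by simpa using h1⟩
    have e := h hm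
    simp only [evalP] at e
    have hx' : ![x 0, x 1] = x := by ext k; fin_cases k <;> simp
    rwa [hx'] at e

lemma line_at {f : Pt → ℝ} {f' : ℝ} {x e : Pt} {τ : ℝ}
    (h : HasLineDerivAt ℝ f f' (x + τ • e) e) : HasDerivAt (fun t : ℝ => f (x + t • e)) f' τ := by
  unfold HasLineDerivAt at h
  have h2 : HasDerivAt (fun t : ℝ => f (x + τ • e + t • e)) f' (τ - τ) := by rwa [sub_self]
  have := HasDerivAt.comp_sub_const τ τ h2
  have e1 : ∀ t : ℝ, x + τ • e + (t - τ) • e = x + t • e := by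
    intro t; rw [sub_smul]; abel
  simp only [e1] at this
  exact this

lemma line_const {U : Set Pt} (hU : Convex ℝ U) {f : Pt → ℝ} {e : Pt}
    (h : ∀ p ∈ U, HasLineDerivAt ℝ f 0 p e) {x : Pt} {t : ℝ} (hx : x ∈ U) (hxt : x + t • e ∈ U) :
    f (x + t • e) = f x := by
  have hs : Convex ℝ {τ : ℝ | x + τ • e ∈ U} := by
    intro a ha b hb u v hu hv huv
    change x + _ ∈ U at ha
    change x + _ ∈ U at hb
    change x + _ ∈ U
    have := hU ha hb hu hv huv
    convert this using 1
    have : x = u • x + v • x := by rw [← add_smul, huv, one_smul]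
    rw [smul_add, smul_add, add_add_add_comm, ← this, add_smul, smul_assoc, smul_assoc]
  have := hs.norm_image_sub_le_of_norm_hasDerivWithin_le (f := fun τ : ℝ => f (x + τ • e))
    (f' := fun _ => 0) (C := 0) (x := 0) (y := t)
    (fun τ hτ => (line_at (h _ hτ)).hasDerivWithinAt) (fun _ _ => by simp) 
    (show x + (0:ℝ) • e ∈ U by simpa using hx) hxt
  simp only [zero_smul, add_zero, zero_mul, norm_le_zero_iff, sub_eq_zero] at this
  exact this

/-- antiderivative in a coordinate direction -/
def Ad (σ : Fin 2) : BPoly →ₗ[ℝ] BPoly :=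
  (basisMonomials (Fin 2) ℝ).constr ℝ
    (fun s => monomial (s + Finsupp.single σ 1) (1 / ((s σ : ℝ) + 1)))

lemma Ad_monomial (σ : Fin 2) (s : Fin 2 →₀ ℕ) (a : ℝ) :
    Ad σ (monomial s a) = monomial (s + Finsupp.single σ 1) (a / ((s σ : ℝ) + 1)) := by
  have h : monomial s a = a • (basisMonomials (Fin 2) ℝ s) := by
    simp [coe_basisMonomials, smul_monomial]
  rw [h, map_smul, Ad, Module.Basis.constr_basis, smul_monomial]
  simp [div_eq_mul_inv]

lemma pderiv_Ad (σ : Fin 2) (q : BPoly) : pderiv σ (Ad σ q) = q := by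
  induction q using MvPolynomial.induction_on' with
  | monomial s a =>
    rw [Ad_monomial, pderiv_monomial]
    have : (s σ : ℝ) + 1 ≠ 0 := by positivity
    simp [div_mul_cancel₀ _ this]
  | add p q hp hq => rw [map_add, map_add, hp, hq]

lemma pderiv_Ad_ne (σ τ : Fin 2) (h : σ ≠ τ) (q : BPoly) :
    pderiv τ (Ad σ q) = Ad σ (pderiv τ q) := by
  induction q using MvPolynomial.induction_on' with
  | monomial s a =>
    rw [Ad_monomial, pderiv_monomial, pderiv_monomial, Ad_monomial]
    have e : s + Finsupp.single σ 1 - Finsupp.single τ 1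
        = s - Finsupp.single τ 1 + Finsupp.single σ 1 := by
      ext k
      by_cases hk : k = σ
      · subst hk; simp [Finsupp.single_apply, h.symm]
      · have hk' : σ ≠ k := fun h => hk h.symm
        simp [Finsupp.single_apply, hk']
    rw [e]
    congr 1
    simp [Finsupp.single_apply, h, h.symm]
    ring
  | add p q hp hq => simp only [map_add, hp, hq]

lemma Ad_deg (σ : Fin 2) (q : BPoly) (k : ℕ) (h : q.totalDegree ≤ k) :
    (Ad σ q).totalDegree ≤ k + 1 := by
  conv_lhs => rw [q.as_sum, map_sum]
  apply totalDegree_finsetSum_le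
  intro s hs
  rw [Ad_monomial]
  apply (totalDegree_monomial_le _ _).trans
  have h1 := (le_totalDegree hs).trans h
  have h2 : ((s + Finsupp.single σ 1).sum fun _ e => e) = (s.sum fun _ e => e) + 1 := by
    rw [Finsupp.sum_add_index']
    · simp
    · simp
    · simp
  exact h2.le.trans (Nat.succ_le_succ h1)

lemma anti1 (i : Fin 3) (hi : i = 0 ∨ i = 1) (q : BPoly) (k : ℕ) (hq : q.totalDegree ≤ k) :
    ∃ Q : BPoly, DL i Q = q ∧ Q.totalDegree ≤ k + 1 := by
  rcases hi with rfl | rfl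
  · exact ⟨Ad 0 q, by rw [DL_apply, DD0, pderiv_Ad], Ad_deg _ _ _ hq⟩
  · exact ⟨Ad 1 q, by rw [DL_apply, DD1, pderiv_Ad], Ad_deg _ _ _ hq⟩

lemma anti2 (i j : Fin 3) (hi : i = 0 ∨ i = 1) (hj : j ≠ i) (q : BPoly) (k : ℕ)
    (hq : q.totalDegree ≤ k) (h0 : DL i q = 0) :
    ∃ Q : BPoly, DL j Q = q ∧ DL i Q = 0 ∧ Q.totalDegree ≤ k + 1 := by
  rcases hi with rfl | rfl
  · rw [DL_apply, DD0] at h0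
    have h1 : pderiv 0 (Ad 1 q) = 0 := by rw [pderiv_Ad_ne _ _ (by decide), h0, map_zero]
    refine ⟨Ad 1 q, ?_, ?_, Ad_deg _ _ _ hq⟩
    · rw [DL_apply]
      fin_cases j
      · exact absurd rfl hj
      · exact (congrArg (fun D : Derivation ℝ BPoly BPoly => D (Ad 1 q)) DD1).trans (pderiv_Ad _ _)
      · refine (congrArg (fun D : Derivation ℝ BPoly BPoly => D (Ad 1 q)) DD2).trans ?_
        simp [h1, pderiv_Ad]
    · rw [DL_apply, DD0, h1]
  · rw [DL_apply, DD1] at h0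
    have h1 : pderiv 1 (Ad 0 q) = 0 := by rw [pderiv_Ad_ne _ _ (by decide), h0, map_zero]
    refine ⟨Ad 0 q, ?_, ?_, Ad_deg _ _ _ hq⟩
    · rw [DL_apply]
      fin_cases j
      · exact (congrArg (fun D : Derivation ℝ BPoly BPoly => D (Ad 0 q)) DD0).trans (pderiv_Ad _ _)
      · exact absurd rfl hj
      · refine (congrArg (fun D : Derivation ℝ BPoly BPoly => D (Ad 0 q)) DD2).trans ?_
        simp [h1, pderiv_Ad]
    · rw [DL_apply, DD1, h1]

lemma coords (i j : Fin 3) (hj : j ≠ i) :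
    ∃ α β : Pt → ℝ, Continuous α ∧ Continuous β ∧ ∀ v, v = α v • eR i + β v • eR j := by
  fin_cases i <;> fin_cases j <;> first | exact absurd rfl hj | skip
  · exact ⟨fun v => v.1, fun v => v.2, by fun_prop, by fun_prop, fun v => by
      ext <;> simp [eR, dirZ]⟩
  · exact ⟨fun v => v.1 - v.2, fun v => v.2, by fun_prop, by fun_prop, fun v => by
      ext <;> simp [eR, dirZ]⟩
  · exact ⟨fun v => v.2, fun v => v.1, by fun_prop, by fun_prop, fun v => by
      ext <;> simp [eR, dirZ]⟩
  · exact ⟨fun v => v.2 - v.1, fun v => v.1, by fun_prop, by fun_prop, fun v => by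
      ext <;> simp [eR, dirZ]⟩
  · exact ⟨fun v => v.2, fun v => v.1 - v.2, by fun_prop, by fun_prop, fun v => by
      ext <;> simp [eR, dirZ]⟩
  · exact ⟨fun v => v.1, fun v => v.2 - v.1, by fun_prop, by fun_prop, fun v => by
      ext <;> simp [eR, dirZ]⟩

lemma coords_zero {i j : Fin 3} {α β : Pt → ℝ} (hj : j ≠ i)
    (h : ∀ v, v = α v • eR i + β v • eR j) : α 0 = 0 ∧ β 0 = 0 := by
  have h0 := h 0
  generalize α 0 = a at h0
  generalize β 0 = b at h0
  fin_cases i <;> fin_cases j <;> first | exact absurd rfl hj | skip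
  all_goals
    simp [eR, dirZ, Prod.ext_iff] at h0
    constructor <;> linarith [h0.1, h0.2]

lemma const_of_two {U : Set Pt} (hU : IsOpen U) (hc : Convex ℝ U) {f : Pt → ℝ} {i j : Fin 3}
    (hij : j ≠ i) (hi : ∀ p ∈ U, HasLineDerivAt ℝ f 0 p (eR i))
    (hj : ∀ p ∈ U, HasLineDerivAt ℝ f 0 p (eR j)) {p q : Pt} (hp : p ∈ U) (hq : q ∈ U) :
    f p = f q := by
  obtain ⟨α, β, hα, hβ, hv⟩ := coords i j hij
  obtain ⟨hα0, hβ0⟩ := coords_zero hij hv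
  have hloc : ∀ x ∈ U, f =ᶠ[𝓝 x] fun _ => f x := by
    intro x hx
    have h1 : ∀ᶠ y in 𝓝 x, x + α (y - x) • eR i ∈ U := by
      have hcont : ContinuousAt (fun y => x + α (y - x) • eR i) x := by fun_prop
      apply hcont.eventually_mem
      simp only [sub_self, hα0, zero_smul, add_zero]
      exact hU.mem_nhds hx
    filter_upwards [h1, hU.mem_nhds hx] with y hy1 hy2
    have e : y = x + α (y - x) • eR i + β (y - x) • eR j := by
      rw [add_assoc, ← hv]; abel
    have e1 := line_const hc hi hx hy1
    have e2 := line_const hc hj (t := β (y - x)) hy1 (by rw [← e]; exact hy2)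
    rw [← e] at e2
    rw [e2, e1]
  have hfd : ∀ x ∈ U, HasFDerivAt f (0 : Pt →L[ℝ] ℝ) x := fun x hx =>
    (hasFDerivAt_const (f x) x).congr_of_eventuallyEq (hloc x hx)
  exact hU.is_const_of_fderiv_eq_zero hc.isPreconnected
    (fun x hx => (hfd x hx).differentiableAt.differentiableWithinAt)
    (fun x hx => (hfd x hx).fderiv) hp hq

lemma HasLineDerivAt.sub' {f g : Pt → ℝ} {f' g' : ℝ} {p e : Pt} (hf : HasLineDerivAt ℝ f f' p e)
    (hg : HasLineDerivAt ℝ g g' p e) : HasLineDerivAt ℝ (fun x => f x - g x) (f' - g') p e := by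
  unfold HasLineDerivAt at *
  exact hf.sub hg

lemma line_eq {U : Set Pt} (hU : IsOpen U) {f : Pt → ℝ} {q : BPoly} (h : EqOn f (evalP q) U)
    {i : Fin 3} {p : Pt} (hp : p ∈ U) {v : ℝ} (hv : HasLineDerivAt ℝ f v p (eR i)) :
    evalP (DL i q) p = v := by
  have h1 : f =ᶠ[𝓝 p] evalP q := h.eventuallyEq_of_mem (hU.mem_nhds hp)
  exact ((h1.hasLineDerivAt_iff.mpr (evalP_line q i p))).unique hv

lemma piece_two {U : Set Pt} (hU : IsOpen U) (hc : Convex ℝ U) (hne : U.Nonempty)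
    {f : Pt → ℝ} {i j : Fin 3} (hi0 : i = 0 ∨ i = 1) (hij : j ≠ i) {qi qj : BPoly} {k : ℕ}
    (hki : qi.totalDegree ≤ k) (hkj : qj.totalDegree ≤ k)
    (hi : ∀ p ∈ U, HasLineDerivAt ℝ f (evalP qi p) p (eR i))
    (hj : ∀ p ∈ U, HasLineDerivAt ℝ f (evalP qj p) p (eR j)) :
    ∃ q : BPoly, q.totalDegree ≤ k + 1 ∧ EqOn f (evalP q) U := by
  obtain ⟨Q, hQ, hQd⟩ := anti1 i hi0 qi k hki
  set s := qj - DL j Q with hs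
  have hhi : ∀ p ∈ U, HasLineDerivAt ℝ (fun x => f x - evalP Q x) 0 p (eR i) := by
    intro p hp
    have := (hi p hp).sub' (evalP_line Q i p)
    rwa [hQ, sub_self] at this
  have hhj : ∀ p ∈ U, HasLineDerivAt ℝ (fun x => f x - evalP Q x) (evalP s p) p (eR j) := by
    intro p hp
    have := (hj p hp).sub' (evalP_line Q j p)
    rwa [← evalP_sub] at this
  have hsi : DL i s = 0 := by
    apply poly_ext_open hU hne
    intro p hp
    rw [evalP_zero]
    have hd := evalP_line s i p
    unfold HasLineDerivAt at hd
    have hev : ∀ᶠ t : ℝ in 𝓝 0, p + t • eR i ∈ U := by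
      have hcont : ContinuousAt (fun t : ℝ => p + t • eR i) 0 := by fun_prop
      apply hcont.eventually_mem
      simpa using hU.mem_nhds hp
    have heq : (fun t : ℝ => evalP s (p + t • eR i)) =ᶠ[𝓝 0] fun _ => evalP s p := by
      filter_upwards [hev] with t ht
      have h1 := hhj _ ht
      have h2 := hhj _ hp
      refine h1.unique ?_
      unfold HasLineDerivAt at h2 ⊢
      refine h2.congr_of_eventuallyEq ?_
      have ev1 : ∀ᶠ u : ℝ in 𝓝 0, p + u • eR j ∈ U := by
        have hcont : ContinuousAt (fun u : ℝ => p + u • eR j) 0 := by fun_prop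
        apply hcont.eventually_mem
        simpa using hU.mem_nhds hp
      have ev2 : ∀ᶠ u : ℝ in 𝓝 0, p + u • eR j + t • eR i ∈ U := by
        have hcont : ContinuousAt (fun u : ℝ => p + u • eR j + t • eR i) 0 := by fun_prop
        apply hcont.eventually_mem
        simpa using hU.mem_nhds ht
      filter_upwards [ev1, ev2] with u hu1 hu2
      have := line_const hc hhi hu1 hu2
      rw [add_right_comm]
      exact this
    exact hd.unique ((hasDerivAt_const (0:ℝ) (evalP s p)).congr_of_eventuallyEq heq)
  have hsd : s.totalDegree ≤ k := by
    apply (totalDegree_sub _ _).trans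
    apply max_le hkj
    rw [DL_apply]
    have hpd : ∀ σ : Fin 2, (pderiv σ Q).totalDegree ≤ k := by
      intro σ
      conv_lhs => rw [Q.as_sum, map_sum]
      apply totalDegree_finsetSum_le
      intro s hs
      rw [pderiv_monomial]
      by_cases h0 : s σ = 0
      · simp [h0]
      apply (totalDegree_monomial_le _ _).trans
      have h1 := (le_totalDegree hs).trans hQd
      have h2 : s = (s - Finsupp.single σ 1) + Finsupp.single σ 1 := by
        ext k
        by_cases hk : k = σ
        · subst hk; simp; omega
        · simp [Finsupp.single_apply, Ne.symm hk]
      have h3 : ((s - Finsupp.single σ 1 + Finsupp.single σ 1).sum fun _ e => e)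
          = ((s - Finsupp.single σ 1).sum fun _ e => e) + 1 := by
        rw [Finsupp.sum_add_index']
        · simp
        · simp
        · simp
      rw [← h2] at h3
      rw [h3] at h1
      exact Nat.le_of_succ_le_succ h1
    have : DD j Q = ((dirZ j).1 : ℝ) • pderiv (0 : Fin 2) Q + ((dirZ j).2 : ℝ) • pderiv (1 : Fin 2) Q := by
      simp [DD]
    rw [this]
    apply (totalDegree_add _ _).trans
    exact max_le ((totalDegree_smul_le _ _).trans (hpd 0)) ((totalDegree_smul_le _ _).trans (hpd 1))
  obtain ⟨R, hR1, hR2, hRd⟩ := anti2 i j hi0 hij s k hsd hsi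
  obtain ⟨p0, hp0⟩ := hne
  set a := f p0 - evalP Q p0 - evalP R p0 with ha
  refine ⟨Q + R + C a, ?_, ?_⟩
  · apply (totalDegree_add _ _).trans
    apply max_le
    · apply (totalDegree_add _ _).trans
      exact max_le hQd hRd
    · simp
  · intro p hp
    have := const_of_two hU hc hij (f := fun x => f x - evalP Q x - evalP R x)
      (fun p hp => by
        have := (hhi p hp).sub' (evalP_line R i p)
        rwa [hR2, evalP_zero, sub_zero] at this)
      (fun p hp => by
        have := (hhj p hp).sub' (evalP_line R j p)
        rwa [hR1, sub_self] at this) hp hp0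
    rw [evalP_add, evalP_add, evalP_C, ha]
    linarith


/-! ### Triangles -/

lemma tri_open (T : Tri) : IsOpen T.toSet := by
  unfold Tri.toSet
  split_ifs
  · refine (isOpen_lt ?_ ?_).and ((isOpen_lt ?_ ?_).and (isOpen_lt ?_ ?_)) <;> fun_prop
  · refine (isOpen_lt ?_ ?_).and ((isOpen_lt ?_ ?_).and (isOpen_lt ?_ ?_)) <;> fun_prop

lemma comb_lt {a b x y x' y' : ℝ} (ha : 0 ≤ a) (hb : 0 ≤ b) (hab : a + b = 1) (h : x < y)
    (h' : x' < y') : a * x + b * x' < a * y + b * y' := by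
  rcases ha.eq_or_lt with h0 | h0
  · subst h0
    have : b = 1 := by linarith
    subst this; linarith
  · have := mul_lt_mul_of_pos_left h h0
    have := mul_le_mul_of_nonneg_left h'.le hb
    linarith

lemma tri_convex (T : Tri) : Convex ℝ T.toSet := by
  unfold Tri.toSet
  split_ifs
  all_goals
    rintro p ⟨h1, h2, h3⟩ q ⟨k1, k2, k3⟩ a b ha hb hab
    have e1 := comb_lt ha hb hab h1 k1
    have e2 := comb_lt ha hb hab h2 k2
    have e3 := comb_lt ha hb hab h3 k3
    have hb' : b = 1 - a := by linarith
    subst hb'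
    refine ⟨?_, ?_, ?_⟩ <;> simp only [Prod.fst_add, Prod.snd_add, Prod.smul_fst, Prod.smul_snd,
      smul_eq_mul] <;> linarith

lemma tri_ne (T : Tri) : T.toSet.Nonempty := by
  unfold Tri.toSet
  split_ifs
  · refine ⟨(T.v.1 + 1/4, T.v.2 + 1/2), ?_, ?_, ?_⟩ <;> simp <;> norm_num
  · refine ⟨(T.v.1 + 1/2, T.v.2 + 1/4), ?_, ?_, ?_⟩ <;> simp <;> norm_num

lemma tri_mem (T : Tri) {p : Pt} (hp : p ∈ T.toSet) :
    ((T.v.1 : ℝ) ≤ p.1 ∧ p.1 ≤ T.v.1 + 1) ∧ ((T.v.2 : ℝ) ≤ p.2 ∧ p.2 ≤ T.v.2 + 1) ∧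
    ((T.up = true ∧ p.1 - T.v.1 < p.2 - T.v.2) ∨ (T.up = false ∧ p.2 - T.v.2 < p.1 - T.v.1)) := by
  unfold Tri.toSet at hp
  split_ifs at hp with h
  · obtain ⟨h1, h2, h3⟩ := hp
    exact ⟨⟨by linarith, by linarith⟩, ⟨by linarith, by linarith⟩, Or.inl ⟨h, h2⟩⟩
  · obtain ⟨h1, h2, h3⟩ := hp
    exact ⟨⟨by linarith, by linarith⟩, ⟨by linarith, by linarith⟩, Or.inr ⟨by simpa using h, h2⟩⟩

lemma tri_bdd (T : Tri) : ∃ R : ℝ, ∀ p ∈ T.toSet, ‖p‖ ≤ R := by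
  refine ⟨max (|(T.v.1 : ℝ)| + 1) (|(T.v.2 : ℝ)| + 1), fun p hp => ?_⟩
  obtain ⟨h1, h2, -⟩ := tri_mem T hp
  rw [Prod.norm_def]
  apply max_le_max
  · rw [Real.norm_eq_abs, abs_le]
    have := neg_abs_le (T.v.1 : ℝ); have := le_abs_self (T.v.1 : ℝ)
    constructor <;> linarith
  · rw [Real.norm_eq_abs, abs_le]
    have := neg_abs_le (T.v.2 : ℝ); have := le_abs_self (T.v.2 : ℝ)
    constructor <;> linarith

/-! ### Univariate splines -/

def IU (f : C(ℝ, ℝ)) : C(ℝ, ℝ) := ⟨fun x => ∫ t in (0:ℝ)..1, f (x - t), by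
    apply intervalIntegral.continuous_parametric_intervalIntegral_of_continuous'
    fun_prop⟩

def USpl (a : ℕ) (f : C(ℝ, ℝ)) : Prop :=
  ∀ k : ℤ, ∃ r : Polynomial ℝ, r.natDegree ≤ a + 1 ∧ ∀ x : ℝ, (k : ℝ) ≤ x → x ≤ k + 1 → f x = r.eval x

lemma poly_anti (r : Polynomial ℝ) (k : ℕ) (h : r.natDegree ≤ k) :
    ∃ R : Polynomial ℝ, Polynomial.derivative R = r ∧ R.natDegree ≤ k + 1 := by
  revert h
  refine Polynomial.induction_with_natDegree_le
    (fun r => ∃ R : Polynomial ℝ, Polynomial.derivative R = r ∧ R.natDegree ≤ k + 1) k ?_ ?_ ?_ r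
  · exact ⟨0, by simp, by simp⟩
  · intro n a _ hn
    refine ⟨Polynomial.C (a / (n + 1)) * Polynomial.X ^ (n + 1), ?_, ?_⟩
    · rw [Polynomial.derivative_C_mul_X_pow]
      have : (n : ℝ) + 1 ≠ 0 := by positivity
      simp [div_mul_cancel₀ _ this]
    · exact (Polynomial.natDegree_C_mul_X_pow_le _ _).trans (by omega)
  · rintro f g - - ⟨F, hF, hF'⟩ ⟨G, hG, hG'⟩
    exact ⟨F + G, by simp [hF, hG], Polynomial.natDegree_add_le_of_degree_le hF' hG'⟩

lemma IU_deriv (f : C(ℝ, ℝ)) (x : ℝ) : HasDerivAt (IU f) (f x - f (x - 1)) x := by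
  have h1 : (IU f : ℝ → ℝ) =
      fun t : ℝ => (∫ s in (0:ℝ)..t, f s) - ∫ s in (0:ℝ)..(t - 1), f s := by
    ext t
    rw [intervalIntegral.integral_interval_sub_left]
    · have := intervalIntegral.integral_comp_sub_left (a := 0) (b := 1) (fun s => f s) t
      rw [sub_zero] at this
      rw [← this]
      rfl
    all_goals apply Continuous.intervalIntegrable; fun_prop
  rw [h1]
  have hc : Continuous fun s : ℝ => f s := by fun_prop
  have h2 := (hc.integral_hasStrictDerivAt 0 x).hasDerivAt
  have h3 := (hc.integral_hasStrictDerivAt 0 (x - 1)).hasDerivAt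
  have h4 := HasDerivAt.comp_sub_const x 1 h3
  exact h2.sub h4

lemma USpl_IU {a : ℕ} {f : C(ℝ, ℝ)} (h : USpl a f) : USpl (a + 1) (IU f) := by
  intro k
  obtain ⟨r1, hd1, h1⟩ := h k
  obtain ⟨r2, hd2, h2⟩ := h (k - 1)
  obtain ⟨R, hR, hRd⟩ := poly_anti (r1 - r2.comp (Polynomial.X - Polynomial.C 1)) (a + 1) (by
    apply (Polynomial.natDegree_sub_le _ _).trans
    apply max_le hd1
    rw [Polynomial.natDegree_comp, Polynomial.natDegree_X_sub_C, mul_one]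
    exact hd2)
  refine ⟨R + Polynomial.C (IU f k - R.eval (k : ℝ)), ?_, ?_⟩
  · rw [Polynomial.natDegree_add_C]; exact hRd
  · intro x hx1 hx2
    have := (convex_Icc (k : ℝ) (k + 1)).norm_image_sub_le_of_norm_hasDerivWithin_le
      (f := fun y => IU f y - R.eval y) (f' := fun _ => 0) (C := 0) (x := k) (y := x)
      (fun y hy => by
        have e := ((IU_deriv f y).sub (R.hasDerivAt y)).hasDerivWithinAt (s := Icc (k : ℝ) (k + 1))
        refine e.congr_deriv ?_
        rw [hR, h1 y hy.1 hy.2, h2 (y - 1) (by push_cast; linarith [hy.1])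
          (by push_cast; linarith [hy.2])]
        simp) (fun _ _ => by simp) (by simp) ⟨hx1, hx2⟩
    simp only [zero_mul, norm_le_zero_iff, sub_eq_zero] at this
    rw [Polynomial.eval_add, Polynomial.eval_C, ← this]
    ring

def Fs (n : ℤ) : C(ℝ, ℝ) := ⟨fun x => max 0 (min (x - n) 1), by fun_prop⟩

lemma Fs_apply (n : ℤ) (x : ℝ) : Fs n x = max 0 (min (x - n) 1) := rfl

lemma USpl_Fs (n : ℤ) : USpl 0 (Fs n) := by
  intro k
  rcases lt_trichotomy k n with h | h | h
  · refine ⟨0, by simp, fun x h1 h2 => ?_⟩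
    have : (k : ℝ) + 1 ≤ n := by exact_mod_cast h
    rw [Fs_apply, max_eq_left]
    · simp
    · exact (min_le_left _ _).trans (by linarith)
  · subst h
    refine ⟨Polynomial.X - Polynomial.C (k : ℝ), by rw [Polynomial.natDegree_X_sub_C], fun x h1 h2 => ?_⟩
    rw [Fs_apply, min_eq_left (by linarith), max_eq_right (by linarith)]
    simp
  · refine ⟨1, by simp, fun x h1 h2 => ?_⟩
    have : (n : ℝ) + 1 ≤ k := by exact_mod_cast h
    rw [Fs_apply, min_eq_right (by linarith), max_eq_right (by norm_num)]
    simp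

/-! ### explicit formulas for one-directional box splines -/

def lam : Fin 3 → Pt → ℝ := ![fun p => p.2, fun p => p.1, fun p => p.1 - p.2]
def L1 : Fin 3 → BPoly := ![X 0, X 1, X 0]
def L2 : Fin 3 → BPoly := ![X 0 - X 1, X 1 - X 0, X 1]

lemma lam_inv (i : Fin 3) (p : Pt) (t : ℝ) : lam i (p - t • eR i) = lam i p := by
  fin_cases i <;> simp [lam, eR, dirZ]

lemma L1_inv (i : Fin 3) (p : Pt) (t : ℝ) : evalP (L1 i) (p - t • eR i) = evalP (L1 i) p - t := by
  fin_cases i <;> simp [L1, eR, dirZ, evalP]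

lemma L2_inv (i : Fin 3) (p : Pt) (t : ℝ) : evalP (L2 i) (p - t • eR i) = evalP (L2 i) p - t := by
  fin_cases i <;> simp [L2, eR, dirZ, evalP] <;> ring

lemma L1_deg (i : Fin 3) : (L1 i).totalDegree ≤ 1 := by
  fin_cases i <;> simp [L1]

lemma L2_deg (i : Fin 3) : (L2 i).totalDegree ≤ 1 := by
  fin_cases i
  · exact (totalDegree_sub _ _).trans (by simp)
  · exact (totalDegree_sub _ _).trans (by simp)
  · simp [L2]

lemma L1_DD (i j k : Fin 3) (hj : j ≠ i) (hk : k ≠ i) (hjk : j ≠ k) :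
    ∃ a b : ℝ, DD j (L1 i) = C a ∧ DD k (L1 i) = C b ∧ a * b = 0 := by
  refine ⟨(![![1,0,1],![0,1,1],![1,0,1]] : Fin 3 → Fin 3 → ℝ) i j,
    (![![1,0,1],![0,1,1],![1,0,1]] : Fin 3 → Fin 3 → ℝ) i k, ?_⟩
  fin_cases i <;> fin_cases j <;> first | exact absurd rfl hj | skip
  all_goals fin_cases k <;> first | exact absurd rfl hk | exact absurd rfl hjk | skip
  all_goals simp [L1, DD, dirZ, pderiv_X]

lemma L2_DD (i j k : Fin 3) (hj : j ≠ i) (hk : k ≠ i) (hjk : j ≠ k) :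
    ∃ a b : ℝ, DD j (L2 i) = C a ∧ DD k (L2 i) = C b ∧ a * b = 0 := by
  refine ⟨(![![1,-1,0],![-1,1,0],![0,1,1]] : Fin 3 → Fin 3 → ℝ) i j,
    (![![1,-1,0],![-1,1,0],![0,1,1]] : Fin 3 → Fin 3 → ℝ) i k, ?_⟩
  fin_cases i <;> fin_cases j <;> first | exact absurd rfl hj | skip
  all_goals fin_cases k <;> first | exact absurd rfl hk | exact absurd rfl hjk | skip
  all_goals simp [L2, DD, dirZ, pderiv_X]

lemma aeval_deg (L : BPoly) (hL : L.totalDegree ≤ 1) (r : Polynomial ℝ) (k : ℕ) (hr : r.natDegree ≤ k) :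
    (Polynomial.aeval L r).totalDegree ≤ k := by
  rw [Polynomial.aeval_eq_sum_range]
  apply totalDegree_finsetSum_le
  intro n hn
  apply (totalDegree_smul_le _ _).trans
  apply (totalDegree_pow _ _).trans
  have := Finset.mem_range.mp hn
  nlinarith

lemma aeval_DD (L : BPoly) (j k : Fin 3) (a b : ℝ) (ha : DD j L = C a) (hb : DD k L = C b)
    (hab : a * b = 0) (r : Polynomial ℝ) : DL j (DL k (Polynomial.aeval L r)) = 0 := by
  rw [DL_apply, DL_apply, Derivation.map_aeval, hb, smul_eq_mul, Derivation.leibniz,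
    Derivation.map_aeval, ha, derivation_C, smul_zero, zero_add, smul_eq_mul, smul_eq_mul,
    mul_left_comm, ← C_mul, mul_comm b a, hab, C_0, mul_zero]

lemma evalP_aeval (L : BPoly) (r : Polynomial ℝ) (p : Pt) :
    evalP (Polynomial.aeval L r) p = r.eval (evalP L p) := by
  unfold evalP
  rw [Polynomial.aeval_def, Polynomial.hom_eval₂]
  rw [Polynomial.eval, Polynomial.eval₂_eq_sum, Polynomial.eval₂_eq_sum]
  simp

lemma tri_int (T : Tri) (i : Fin 3) : (∃ k : ℤ, ∀ p ∈ T.toSet, (k : ℝ) ≤ lam i p ∧ lam i p ≤ k + 1) ∧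
    (∃ k : ℤ, ∀ p ∈ T.toSet, (k : ℝ) ≤ evalP (L1 i) p ∧ evalP (L1 i) p ≤ k + 1) ∧
    (∃ k : ℤ, ∀ p ∈ T.toSet, (k : ℝ) ≤ evalP (L2 i) p ∧ evalP (L2 i) p ≤ k + 1) := by
  have hx : ∃ k : ℤ, ∀ p ∈ T.toSet, (k : ℝ) ≤ p.1 ∧ p.1 ≤ k + 1 :=
    ⟨T.v.1, fun p hp => (tri_mem T hp).1⟩
  have hy : ∃ k : ℤ, ∀ p ∈ T.toSet, (k : ℝ) ≤ p.2 ∧ p.2 ≤ k + 1 :=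
    ⟨T.v.2, fun p hp => (tri_mem T hp).2.1⟩
  have hu : ∃ k : ℤ, ∀ p ∈ T.toSet, (k : ℝ) ≤ p.1 - p.2 ∧ p.1 - p.2 ≤ k + 1 := by
    by_cases hT : T.up = true
    · refine ⟨T.v.1 - T.v.2 - 1, fun p hp => ?_⟩
      obtain ⟨h1, h2, h3 | h3⟩ := tri_mem T hp
      · push_cast; constructor <;> linarith
      · simp [hT] at h3
    · refine ⟨T.v.1 - T.v.2, fun p hp => ?_⟩
      obtain ⟨h1, h2, h3 | h3⟩ := tri_mem T hp
      · exact absurd h3.1 hT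
      · push_cast; constructor <;> linarith
  have hv : ∃ k : ℤ, ∀ p ∈ T.toSet, (k : ℝ) ≤ p.2 - p.1 ∧ p.2 - p.1 ≤ k + 1 := by
    obtain ⟨k, hk⟩ := hu
    refine ⟨-k - 1, fun p hp => ?_⟩
    have := hk p hp
    push_cast; constructor <;> linarith
  have a0 : evalP (X 0) = fun p => p.1 := by ext p; simp [evalP]
  have a1 : evalP (X 1) = fun p => p.2 := by ext p; simp [evalP]
  have a2 : evalP (X 0 - X 1) = fun p => p.1 - p.2 := by ext p; simp [evalP]
  have a3 : evalP (X 1 - X 0) = fun p => p.2 - p.1 := by ext p; simp [evalP]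
  fin_cases i
  · change _ ∧ (∃ k : ℤ, ∀ p ∈ T.toSet, (k : ℝ) ≤ evalP (X 0) p ∧ evalP (X 0) p ≤ k + 1) ∧
      (∃ k : ℤ, ∀ p ∈ T.toSet, (k : ℝ) ≤ evalP (X 0 - X 1) p ∧ evalP (X 0 - X 1) p ≤ k + 1)
    rw [a0, a2]; exact ⟨hy, hx, hu⟩
  · change _ ∧ (∃ k : ℤ, ∀ p ∈ T.toSet, (k : ℝ) ≤ evalP (X 1) p ∧ evalP (X 1) p ≤ k + 1) ∧
      (∃ k : ℤ, ∀ p ∈ T.toSet, (k : ℝ) ≤ evalP (X 1 - X 0) p ∧ evalP (X 1 - X 0) p ≤ k + 1)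
    rw [a1, a3]; exact ⟨hx, hy, hv⟩
  · change _ ∧ (∃ k : ℤ, ∀ p ∈ T.toSet, (k : ℝ) ≤ evalP (X 0) p ∧ evalP (X 0) p ≤ k + 1) ∧
      (∃ k : ℤ, ∀ p ∈ T.toSet, (k : ℝ) ≤ evalP (X 1) p ∧ evalP (X 1) p ≤ k + 1)
    rw [a0, a1]; exact ⟨hu, hx, hy⟩

lemma hat_val (x y v : ℝ) (h0 : 0 ≤ v) (h1 : v ≤ x) (h2 : v ≤ y) (h3 : v ≤ 2 - x) (h4 : v ≤ 2 - y)
    (h5 : v ≤ 1 - (x - y)) (h6 : v ≤ 1 + (x - y))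
    (h : x ≤ v ∨ y ≤ v ∨ 2 - x ≤ v ∨ 2 - y ≤ v ∨ 1 - (x - y) ≤ v ∨ 1 + (x - y) ≤ v) :
    hat (x, y) = v := by
  unfold hat
  apply le_antisymm
  · apply max_le h0
    simp only [min_le_iff]
    tauto
  · exact le_max_of_le_right (by simp only [le_min_iff]; tauto)

lemma hat_zero' (x y : ℝ) (h : x ≤ 0 ∨ y ≤ 0 ∨ 2 - x ≤ 0 ∨ 2 - y ≤ 0 ∨ 1 - (x - y) ≤ 0 ∨
    1 + (x - y) ≤ 0) : hat (x, y) = 0 := by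
  unfold hat
  apply max_eq_left
  simp only [min_le_iff]
  tauto

lemma rmp0 {z : ℝ} (h : z ≤ 0) : max 0 (min z 1) = 0 :=
  max_eq_left ((min_le_left _ _).trans h)
lemma rmp1 {z : ℝ} (h : 1 ≤ z) : max 0 (min z 1) = 1 := by
  rw [min_eq_right h, max_eq_right zero_le_one]
lemma rmpz {z : ℝ} (h : 0 ≤ z) (h' : z ≤ 1) : max 0 (min z 1) = z := by
  rw [min_eq_left h', max_eq_right h]

lemma hat_f0 (x y : ℝ) (h0 : 0 ≤ y) (h1 : y ≤ 1) :
    hat (x, y) = max 0 (min x 1) - max 0 (min (x - y) 1) := by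
  rcases le_total x 0 with a | a
  · rw [rmp0 a, rmp0 (by linarith), hat_zero' _ _ (Or.inl a), sub_zero]
  rcases le_total (x - y) 0 with b | b
  · rw [rmpz a (by linarith), rmp0 b]
    apply hat_val <;> try linarith
    left; linarith
  rcases le_total x 1 with d | d
  · rw [rmpz a d, rmpz b (by linarith)]
    apply hat_val <;> try linarith
    right; left; linarith
  rcases le_total (x - y) 1 with e | e
  · rw [rmp1 d, rmpz b e]
    apply hat_val <;> try linarith
    right; right; right; right; left; linarith
  · rw [rmp1 d, rmp1 e, hat_zero', sub_self]
    right; right; right; right; left; linarith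

lemma hat_f1 (x y : ℝ) (h0 : 1 ≤ y) (h1 : y ≤ 2) :
    hat (x, y) = max 0 (min (x - y + 1) 1) - max 0 (min (x - 1) 1) := by
  rcases le_total (x - y + 1) 0 with a | a
  · rw [rmp0 a, rmp0 (by linarith), hat_zero', sub_zero]
    right; right; right; right; right; linarith
  rcases le_total (x - 1) 0 with b | b
  · rw [rmpz a (by linarith), rmp0 b]
    apply hat_val <;> try linarith
    right; right; right; right; right; linarith
  rcases le_total (x - y + 1) 1 with d | d
  · rw [rmpz a d, rmpz b (by linarith)]
    apply hat_val <;> try linarith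
    right; right; right; left; linarith
  rcases le_total (x - 1) 1 with e | e
  · rw [rmp1 d, rmpz b e]
    apply hat_val <;> try linarith
    right; right; left; linarith
  · rw [rmp1 d, rmp1 e, hat_zero', sub_self]
    right; right; left; linarith

lemma hat_symm (x y : ℝ) : hat (x, y) = hat (y, x) := by
  simp only [hat]
  rw [min_comm x y, min_comm (2 - x), min_comm (1 - (x - y))]
  congr 3 <;> ring

lemma hat_g0 (x y : ℝ) (h0 : 0 ≤ x - y) (h1 : x - y ≤ 1) :
    hat (x, y) = max 0 (min y 1) - max 0 (min (x - 1) 1) := by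
  rcases le_total y 0 with a | a
  · rw [rmp0 a, rmp0 (by linarith), hat_zero' _ _ (Or.inr (Or.inl a)), sub_zero]
  rcases le_total (x - 1) 0 with b | b
  · rw [rmpz a (by linarith), rmp0 b]
    apply hat_val <;> try linarith
    right; left; linarith
  rcases le_total y 1 with d | d
  · rw [rmpz a d, rmpz b (by linarith)]
    apply hat_val <;> try linarith
    right; right; right; right; left; linarith
  rcases le_total (x - 1) 1 with e | e
  · rw [rmp1 d, rmpz b e]
    apply hat_val <;> try linarith
    right; right; left; linarith
  · rw [rmp1 d, rmp1 e, hat_zero', sub_self]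
    right; right; left; linarith

lemma hat_zero (x y : ℝ) (h : y ≤ 0 ∨ 2 ≤ y ∨ 1 ≤ x - y ∨ x - y ≤ -1) : hat (x, y) = 0 := by
  unfold hat
  apply max_eq_left
  simp only [min_le_iff]
  rcases h with h | h | h | h
  · exact Or.inl (Or.inl (Or.inr h))
  · exact Or.inl (Or.inr (Or.inr (by linarith)))
  · exact Or.inr (Or.inl (by linarith))
  · exact Or.inr (Or.inr (by linarith))


lemma lam0 (p : Pt) : lam 0 p = p.2 := rfl
lemma lam1 (p : Pt) : lam 1 p = p.1 := rfl
lemma lam2 (p : Pt) : lam 2 p = p.1 - p.2 := rfl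

lemma int_cases (l n : ℤ) : l - n = 0 ∨ l - n = 1 ∨ l - n + 1 ≤ 0 ∨ 2 ≤ l - n := by omega

lemma hat_strip (i : Fin 3) (w : ℤ × ℤ) (l : ℤ) : ∃ (ε : ℝ) (a b : ℤ), ∀ p : Pt,
    (l : ℝ) ≤ lam i p → lam i p ≤ l + 1 →
    hatT w p = ε * (Fs a (evalP (L1 i) p) - Fs b (evalP (L2 i) p)) := by
  have A0 : ∀ p, evalP (L1 0) p = p.1 := fun p => by simp [L1, evalP]
  have B0 : ∀ p, evalP (L2 0) p = p.1 - p.2 := fun p => by simp [L2, evalP]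
  have A1 : ∀ p, evalP (L1 1) p = p.2 := fun p => by simp [L1, evalP]
  have B1 : ∀ p, evalP (L2 1) p = p.2 - p.1 := fun p => by simp [L2, evalP]
  have A2 : ∀ p, evalP (L1 2) p = p.1 := fun p => by simp [L1, evalP]
  have B2 : ∀ p, evalP (L2 2) p = p.2 := fun p => by simp [L2, evalP]
  obtain rfl | rfl | rfl : i = 0 ∨ i = 1 ∨ i = 2 := by fin_cases i <;> simp
  · simp only [A0, B0, lam0, Fs_apply, hatT_apply]
    rcases int_cases l w.2 with h | h | h | h
    · have h' : (l : ℝ) - w.2 = 0 := by exact_mod_cast h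
      refine ⟨1, w.1, w.1 - w.2, fun p h1 h2 => ?_⟩
      rw [hat_f0 _ _ (by linarith) (by linarith)]
      push_cast
      ring_nf
    · have h' : (l : ℝ) - w.2 = 1 := by exact_mod_cast h
      refine ⟨-1, w.1 + 1, w.1 - w.2 - 1, fun p h1 h2 => ?_⟩
      rw [hat_f1 _ _ (by linarith) (by linarith)]
      push_cast
      ring_nf
    · have h' : (l : ℝ) - w.2 + 1 ≤ 0 := by exact_mod_cast h
      refine ⟨0, 0, 0, fun p h1 h2 => ?_⟩
      rw [zero_mul]
      exact hat_zero _ _ (by left; linarith)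
    · have h' : 2 ≤ (l : ℝ) - w.2 := by exact_mod_cast h
      refine ⟨0, 0, 0, fun p h1 h2 => ?_⟩
      rw [zero_mul]
      exact hat_zero _ _ (by right; left; linarith)
  · simp only [A1, B1, lam1, Fs_apply, hatT_apply]
    rcases int_cases l w.1 with h | h | h | h
    · have h' : (l : ℝ) - w.1 = 0 := by exact_mod_cast h
      refine ⟨1, w.2, w.2 - w.1, fun p h1 h2 => ?_⟩
      rw [hat_symm, hat_f0 _ _ (by linarith) (by linarith)]
      push_cast
      ring_nf
    · have h' : (l : ℝ) - w.1 = 1 := by exact_mod_cast h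
      refine ⟨-1, w.2 + 1, w.2 - w.1 - 1, fun p h1 h2 => ?_⟩
      rw [hat_symm, hat_f1 _ _ (by linarith) (by linarith)]
      push_cast
      ring_nf
    · have h' : (l : ℝ) - w.1 + 1 ≤ 0 := by exact_mod_cast h
      refine ⟨0, 0, 0, fun p h1 h2 => ?_⟩
      rw [zero_mul, hat_symm]
      exact hat_zero _ _ (by left; linarith)
    · have h' : 2 ≤ (l : ℝ) - w.1 := by exact_mod_cast h
      refine ⟨0, 0, 0, fun p h1 h2 => ?_⟩
      rw [zero_mul, hat_symm]
      exact hat_zero _ _ (by right; left; linarith)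
  · simp only [A2, B2, lam2, Fs_apply, hatT_apply]
    rcases int_cases l (w.1 - w.2 - 1) with h | h | h | h
    · have h' : (l : ℝ) - (w.1 - w.2 - 1) = 0 := by exact_mod_cast h
      refine ⟨1, w.1, w.2 + 1, fun p h1 h2 => ?_⟩
      rw [hat_symm, hat_g0 _ _ (by linarith) (by linarith)]
      push_cast
      ring_nf
    · have h' : (l : ℝ) - (w.1 - w.2 - 1) = 1 := by exact_mod_cast h
      refine ⟨-1, w.1 + 1, w.2, fun p h1 h2 => ?_⟩
      rw [hat_g0 _ _ (by linarith) (by linarith)]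
      push_cast
      ring_nf
    · have h' : (l : ℝ) - (w.1 - w.2 - 1) + 1 ≤ 0 := by exact_mod_cast h
      refine ⟨0, 0, 0, fun p h1 h2 => ?_⟩
      rw [zero_mul]
      exact hat_zero _ _ (by right; right; right; linarith)
    · have h' : 2 ≤ (l : ℝ) - (w.1 - w.2 - 1) := by exact_mod_cast h
      refine ⟨0, 0, 0, fun p h1 h2 => ?_⟩
      rw [zero_mul]
      exact hat_zero _ _ (by right; right; left; linarith)

lemma op_strip (i : Fin 3) (w : ℤ × ℤ) (l : ℤ) (a : ℕ) : ∃ (ε : ℝ) (f g : C(ℝ, ℝ)), USpl a f ∧ USpl a g ∧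
    ∀ p : Pt, (l : ℝ) ≤ lam i p → lam i p ≤ l + 1 →
    op (Pi.single i a) (hatT w) p = ε * (f (evalP (L1 i) p) - g (evalP (L2 i) p)) := by
  induction a with
  | zero =>
    obtain ⟨ε, a, b, h⟩ := hat_strip i w l
    refine ⟨ε, Fs a, Fs b, USpl_Fs a, USpl_Fs b, ?_⟩
    simpa [op_zero] using h
  | succ a ih =>
    obtain ⟨ε, f, g, hf, hg, h⟩ := ih
    refine ⟨ε, IU f, IU g, USpl_IU hf, USpl_IU hg, fun p h1 h2 => ?_⟩
    rw [Pi.single_add, op_succ, II_apply]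
    have : ∀ t : ℝ, op (Pi.single i a) (hatT w) (p - t • eR i) =
        ε * (f (evalP (L1 i) p - t) - g (evalP (L2 i) p - t)) := fun t => by
      rw [h, L1_inv, L2_inv] <;> rw [lam_inv] <;> assumption
    simp only [this]
    rw [intervalIntegral.integral_const_mul, intervalIntegral.integral_sub]
    · rfl
    all_goals apply Continuous.intervalIntegrable; fun_prop

lemma piece_E0 (i : Fin 3) (a : ℕ) (w : ℤ × ℤ) (T : Tri) : ∃ q : BPoly, q.totalDegree ≤ a + 1 ∧
    EqOn (op (Pi.single i a) (hatT w)) (evalP q) T.toSet ∧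
    ∀ j k, j ≠ i → k ≠ i → j ≠ k → DL j (DL k q) = 0 := by
  obtain ⟨⟨l, hl⟩, ⟨k1, hk1⟩, ⟨k2, hk2⟩⟩ := tri_int T i
  obtain ⟨ε, f, g, hf, hg, h⟩ := op_strip i w l a
  obtain ⟨r1, hr1, h1⟩ := hf k1
  obtain ⟨r2, hr2, h2⟩ := hg k2
  refine ⟨ε • (Polynomial.aeval (L1 i) r1 - Polynomial.aeval (L2 i) r2), ?_, ?_, ?_⟩
  · apply (totalDegree_smul_le _ _).trans
    apply (totalDegree_sub _ _).trans
    exact max_le (aeval_deg _ (L1_deg i) _ _ hr1) (aeval_deg _ (L2_deg i) _ _ hr2)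
  · intro p hp
    rw [h p (hl p hp).1 (hl p hp).2, evalP_smul, evalP_sub, evalP_aeval, evalP_aeval,
      h1 _ (hk1 p hp).1 (hk1 p hp).2, h2 _ (hk2 p hp).1 (hk2 p hp).2]
  · intro j k hj hk hjk
    obtain ⟨x, y, hx, hy, hxy⟩ := L1_DD i j k hj hk hjk
    obtain ⟨x', y', hx', hy', hxy'⟩ := L2_DD i j k hj hk hjk
    rw [map_smul, map_smul, map_sub, map_sub, aeval_DD _ j k x y hx hy hxy,
      aeval_DD _ j k x' y' hx' hy' hxy', sub_zero, smul_zero]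

lemma evalP_sum {ι : Type*} (s : Finset ι) (f : ι → BPoly) (p : Pt) :
    evalP (∑ w ∈ s, f w) p = ∑ w ∈ s, evalP (f w) p := by
  simp [evalP]

lemma piece_E (i : Fin 3) (a : ℕ) (c : ℤ × ℤ → ℝ) (T : Tri) : ∃ q : BPoly, q.totalDegree ≤ a + 1 ∧
    EqOn (S (Pi.single i a) c) (evalP q) T.toSet ∧
    ∀ j k, j ≠ i → k ≠ i → j ≠ k → DL j (DL k q) = 0 := by
  obtain ⟨R, hR⟩ := tri_bdd T
  obtain ⟨s, hs⟩ := S_loc (Pi.single i a) R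
  choose Q hQ1 hQ2 hQ3 using fun w => piece_E0 i a w T
  refine ⟨∑ w ∈ s, c w • Q w, ?_, ?_, ?_⟩
  · apply totalDegree_finsetSum_le
    intro w _
    exact (totalDegree_smul_le _ _).trans (hQ1 w)
  · intro p hp
    rw [hs s subset_rfl c p (hR p hp), evalP_sum]
    refine Finset.sum_congr rfl fun w _ => ?_
    rw [evalP_smul, hQ2 w hp]
  · intro j k hj hk hjk
    simp [map_sum, hQ3 _ j k hj hk hjk]

lemma single_or (m : Fin 3 → ℕ) : (∃ i a, m = Pi.single i a) ∨
    ∃ i j, (i = 0 ∨ i = 1) ∧ j ≠ i ∧ m i ≠ 0 ∧ m j ≠ 0 := by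
  by_cases h0 : m 0 = 0
  · by_cases h1 : m 1 = 0
    · left; refine ⟨2, m 2, ?_⟩
      ext k; fin_cases k <;> simp [h0, h1]
    · by_cases h2 : m 2 = 0
      · left; refine ⟨1, m 1, ?_⟩
        ext k; fin_cases k <;> simp [h0, h2]
      · right; exact ⟨1, 2, by simp, by decide, h1, h2⟩
  · by_cases h1 : m 1 = 0
    · by_cases h2 : m 2 = 0
      · left; refine ⟨0, m 0, ?_⟩
        ext k; fin_cases k <;> simp [h1, h2]
      · right; exact ⟨0, 2, by simp, by decide, h0, h2⟩
    · right; exact ⟨0, 1, by simp, by decide, h0, h1⟩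

def sm (m : Fin 3 → ℕ) : ℕ := m 0 + m 1 + m 2

lemma sm_succ (m : Fin 3 → ℕ) (i : Fin 3) : sm (m + Pi.single i 1) = sm m + 1 := by
  fin_cases i <;> simp [sm] <;> omega

lemma sm_single (i : Fin 3) (a : ℕ) : sm (Pi.single i a) = a := by
  fin_cases i <;> simp [sm]

lemma piece_P (k : ℕ) : ∀ m, sm m = k → ∀ (c : ℤ × ℤ → ℝ) (T : Tri), ∃ q : BPoly,
    q.totalDegree ≤ k + 1 ∧ EqOn (S m c) (evalP q) T.toSet := by
  induction k with
  | zero =>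
    intro m hm c T
    have : m = Pi.single 0 0 := by
      ext j; unfold sm at hm; fin_cases j <;> simp <;> omega
    subst this
    obtain ⟨q, h1, h2, -⟩ := piece_E 0 0 c T
    exact ⟨q, h1, h2⟩
  | succ k ih =>
    intro m hm c T
    rcases single_or m with ⟨i, a, rfl⟩ | ⟨i, j, hi, hij, hmi, hmj⟩
    · obtain ⟨q, h1, h2, -⟩ := piece_E i a c T
      rw [sm_single] at hm
      exact ⟨q, by omega, h2⟩
    · obtain ⟨mi, hmi⟩ := exists_pred m i hmi
      obtain ⟨mj, hmj⟩ := exists_pred m j hmj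
      obtain ⟨qi, hdi, hqi⟩ := ih mi (by rw [hmi, sm_succ] at hm; omega) (nab i c) T
      obtain ⟨qj, hdj, hqj⟩ := ih mj (by rw [hmj, sm_succ] at hm; omega) (nab j c) T
      obtain ⟨q, h⟩ := piece_two (tri_open T) (tri_convex T) (tri_ne T) (f := S m c) hi hij hdi hdj
        (fun p hp => by rw [← hqi hp, hmi]; exact S_line _ _ _ _)
        (fun p hp => by rw [← hqj hp, hmj]; exact S_line _ _ _ _)
      exact ⟨q, h.1, h.2⟩

lemma piece_DL {m : Fin 3 → ℕ} {i : Fin 3} {c : ℤ × ℤ → ℝ} {T : Tri} {q : BPoly}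
    (h : EqOn (S (m + Pi.single i 1) c) (evalP q) T.toSet) :
    EqOn (S m (nab i c)) (evalP (DL i q)) T.toSet := fun p hp =>
  (line_eq (tri_open T) h hp (S_line m i c p)).symm

lemma piece_DD (k : ℕ) : ∀ m, sm m = k → ∀ (c : ℤ × ℤ → ℝ) (T : Tri) (q : BPoly),
    EqOn (S m c) (evalP q) T.toSet → ∀ i j, i ≠ j →
    ((DL i) ^ (m i + 1)) (((DL j) ^ (m j + 1)) q) = 0 := by
  induction k with
  | zero =>
    intro m hm c T q hq i j hij
    have hz : m = 0 := by
      ext j; unfold sm at hm; fin_cases j <;> simp <;> omega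
    obtain ⟨l, hli, hlj⟩ : ∃ l : Fin 3, i ≠ l ∧ j ≠ l := by revert i j; decide
    subst hz
    obtain ⟨q', h1, h2, h3⟩ := piece_E l 0 c T
    rw [Pi.single_zero] at h2
    have : q = q' := poly_ext_open (tri_open T) (tri_ne T) (hq.symm.trans h2)
    subst this
    simpa using h3 i j hli hlj hij
  | succ k ih =>
    intro m hm c T q hq i j hij
    by_cases hi : m i = 0
    · by_cases hj : m j = 0
      · obtain ⟨l, hli, hlj⟩ : ∃ l : Fin 3, i ≠ l ∧ j ≠ l := by
          clear hq hi hj; revert i j; decide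
        have hz : m = Pi.single l (m l) := by
          ext x
          by_cases hx : x = l
          · subst hx; simp
          · rw [Pi.single_eq_of_ne hx]
            have : x = i ∨ x = j := by
              clear hq hi hj; revert i j x l; decide
            rcases this with rfl | rfl <;> assumption
        obtain ⟨q', h1, h2, h3⟩ := piece_E l (m l) c T
        rw [← hz] at h2
        have : q = q' := poly_ext_open (tri_open T) (tri_ne T) (hq.symm.trans h2)
        subst this
        rw [hi, hj]
        simpa using h3 i j hli hlj hij
      · obtain ⟨m', rfl⟩ := exists_pred m j hj
        have := ih m' (by rw [sm_succ] at hm; omega) _ T _ (piece_DL hq) i j hij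
        rw [Pi.add_apply, Pi.add_apply, Pi.single_eq_same, Pi.single_eq_of_ne hij, add_zero,
          pow_succ _ (m' j + 1)]
        exact this
    · obtain ⟨m', rfl⟩ := exists_pred m i hi
      have := ih m' (by rw [sm_succ] at hm; omega) _ T _ (piece_DL hq) i j hij
      rw [Pi.add_apply, Pi.add_apply, Pi.single_eq_same, Pi.single_eq_of_ne hij.symm, add_zero,
          pow_succ _ (m' i + 1)]
      have e := congrArg (fun f => f q) ((DL_comm i j).pow_right (m' j + 1)).eq
      simp only [Module.End.mul_apply] at e ⊢
      rw [e]
      exact this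

def Cond (m : Fin 3 → ℕ) (q : BPoly) : Prop := ∀ i j, i ≠ j →
    ((DL i) ^ (m i + 1)) (((DL j) ^ (m j + 1)) q) = 0

lemma piece_D {m : Fin 3 → ℕ} {c : ℤ × ℤ → ℝ} {T : Tri} {q : BPoly}
    (h : EqOn (S m c) (evalP q) T.toSet) : Cond m q := piece_DD _ m rfl c T q h

lemma pow_comm_app (i j : Fin 3) (k : ℕ) (q : BPoly) :
    ((DL i) ^ k) (DL j q) = DL j (((DL i) ^ k) q) := by
  have e := congrArg (fun f => f q) ((DL_comm i j).pow_left k).eq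
  simpa only [Module.End.mul_apply] using e

lemma Cond_sub {m : Fin 3 → ℕ} {q r : BPoly} (hq : Cond m q) (hr : Cond m r) : Cond m (q - r) := by
  intro i j hij
  rw [map_sub, map_sub, hq i j hij, hr i j hij, sub_zero]

lemma Cond_step {m : Fin 3 → ℕ} {l : Fin 3} {q : BPoly} (h : Cond (m + Pi.single l 1) q) :
    Cond m (DL l q) := by
  intro i j hij
  have := h i j hij
  rw [Pi.add_apply, Pi.add_apply] at this
  by_cases hi : i = l
  · subst hi
    rw [Pi.single_eq_same, Pi.single_eq_of_ne hij.symm, add_zero, pow_succ _ (m i + 1)] at this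
    rw [pow_comm_app]
    exact this
  · by_cases hj : j = l
    · subst hj
      rw [Pi.single_eq_same, Pi.single_eq_of_ne hij, add_zero, pow_succ _ (m j + 1)] at this
      exact this
    · rw [Pi.single_eq_of_ne hi, Pi.single_eq_of_ne hj, add_zero, add_zero] at this
      rw [pow_comm_app, pow_comm_app, this, map_zero]


/-! ### Affine reproduction and invariance -/

lemma univ_line_const {q : BPoly} {i : Fin 3} (h : DL i q = 0) (x : Pt) (t : ℝ) :
    evalP q (x + t • eR i) = evalP q x := by
  apply line_const convex_univ _ (mem_univ _) (mem_univ _)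
  intro p _
  have := evalP_line q i p
  rwa [h, evalP_zero] at this

lemma const_poly {q : BPoly} {i j : Fin 3} (hij : j ≠ i) (hi : DL i q = 0) (hj : DL j q = 0) :
    ∃ a : ℝ, q = C a := by
  refine ⟨evalP q 0, poly_ext_open isOpen_univ univ_nonempty fun p _ => ?_⟩
  rw [evalP_C]
  refine const_of_two isOpen_univ convex_univ hij ?_ ?_ (mem_univ _) (mem_univ _)
  · intro p _
    have := evalP_line q i p
    rwa [hi, evalP_zero] at this
  · intro p _
    have := evalP_line q j p
    rwa [hj, evalP_zero] at this

lemma Cond_zero {h : BPoly} (hh : Cond 0 h) :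
    ∃ α β γ : ℝ, ∀ p, evalP h p = α + β * p.1 + γ * p.2 := by
  have H : ∀ i j, i ≠ j → DL i (DL j h) = 0 := fun i j hij => by simpa using hh i j hij
  obtain ⟨β, hβ⟩ := const_poly (i := 1) (j := 2) (by decide) (H 1 0 (by decide)) (H 2 0 (by decide))
  obtain ⟨γ, hγ⟩ := const_poly (i := 0) (j := 2) (by decide) (H 0 1 (by decide)) (H 2 1 (by decide))
  obtain ⟨α, hα⟩ := const_poly (q := h - (β • X 0 + γ • X 1)) (i := 0) (j := 1) (by decide)
    (by rw [map_sub, hβ, DL_apply, DD0]; simp [smul_eq_C_mul, pderiv_X])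
    (by rw [map_sub, hγ, DL_apply, DD1]; simp [smul_eq_C_mul, pderiv_X])
  refine ⟨α, β, γ, fun p => ?_⟩
  have : evalP (h - (β • X 0 + γ • X 1)) p = α := by rw [hα, evalP_C]
  simp [evalP] at this ⊢
  linarith

lemma S0_four (c : ℤ × ℤ → ℝ) (k l : ℤ) (x y : ℝ) (hx0 : 0 ≤ x) (hx1 : x ≤ 1) (hy0 : 0 ≤ y)
    (hy1 : y ≤ 1) : S0 c (k + x, l + y) = c (k - 1, l - 1) * hat (x + 1, y + 1) +
      c (k, l - 1) * hat (x, y + 1) + (c (k - 1, l) * hat (x + 1, y) + c (k, l) * hat (x, y)) := by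
  rw [S0_eq_sum c _ ({k - 1, k} ×ˢ {l - 1, l})]
  · rw [Finset.sum_product_right, Finset.sum_pair (by omega), Finset.sum_pair (by omega),
      Finset.sum_pair (by omega)]
    simp only [hatT_apply]
    push_cast
    congr 3 <;> congr 2 <;> ring_nf
  · intro w hw
    obtain ⟨h1, h2, h3, h4⟩ := hatT_ne hw
    simp only at h1 h2 h3 h4
    have e1 : w.1 < k + 1 := by
      have : (w.1 : ℝ) < k + 1 := by linarith
      exact_mod_cast this
    have e2 : k < w.1 + 2 := by
      have : (k : ℝ) < w.1 + 2 := by linarith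
      exact_mod_cast this
    have e3 : w.2 < l + 1 := by
      have : (w.2 : ℝ) < l + 1 := by linarith
      exact_mod_cast this
    have e4 : l < w.2 + 2 := by
      have : (l : ℝ) < w.2 + 2 := by linarith
      exact_mod_cast this
    simp only [Finset.mem_product, Finset.mem_insert, Finset.mem_singleton]
    omega

lemma S0_lower (c : ℤ × ℤ → ℝ) (k l : ℤ) (x y : ℝ) (hy0 : 0 ≤ y) (hxy : y ≤ x) (hx1 : x ≤ 1) :
    S0 c (k + x, l + y) = c (k - 1, l - 1) * (1 - x) + c (k, l - 1) * (x - y) + c (k, l) * y := by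
  rw [S0_four c k l x y (by linarith) hx1 hy0 (by linarith),
    hat_val (x + 1) (y + 1) (1 - x), hat_val x (y + 1) (x - y), hat_zero' (x + 1) y,
    hat_val x y y]
  · ring
  all_goals first | linarith | skip
  all_goals first | (left; linarith) | (right; left; linarith) | (right; right; left; linarith) |
    (right; right; right; left; linarith) | (right; right; right; right; left; linarith) |
    (right; right; right; right; right; linarith)

lemma S0_upper (c : ℤ × ℤ → ℝ) (k l : ℤ) (x y : ℝ) (hx0 : 0 ≤ x) (hxy : x ≤ y) (hy1 : y ≤ 1) :
    S0 c (k + x, l + y) = c (k - 1, l - 1) * (1 - y) + c (k - 1, l) * (y - x) + c (k, l) * x := by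
  rw [S0_four c k l x y hx0 (by linarith) (by linarith) hy1,
    hat_val (x + 1) (y + 1) (1 - y), hat_zero' x (y + 1), hat_val (x + 1) y (y - x),
    hat_val x y x]
  · ring
  all_goals first | linarith | skip
  all_goals first | (left; linarith) | (right; left; linarith) | (right; right; left; linarith) |
    (right; right; right; left; linarith) | (right; right; right; right; left; linarith) |
    (right; right; right; right; right; linarith)

lemma floor_dec (p : Pt) : ∃ (k l : ℤ) (x y : ℝ), 0 ≤ x ∧ x < 1 ∧ 0 ≤ y ∧ y < 1 ∧
    p = (k + x, l + y) ∧ k = ⌊p.1⌋ ∧ l = ⌊p.2⌋ ∧ x = Int.fract p.1 ∧ y = Int.fract p.2 :=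
  ⟨⌊p.1⌋, ⌊p.2⌋, Int.fract p.1, Int.fract p.2, Int.fract_nonneg _, Int.fract_lt_one _,
    Int.fract_nonneg _, Int.fract_lt_one _, by simp, rfl, rfl, rfl, rfl⟩

lemma S0_affine {h : BPoly} (hh : Cond 0 h) (p : Pt) :
    S0 (fun w => evalP h ((w.1 : ℝ) + 1, (w.2 : ℝ) + 1)) p = evalP h p := by
  obtain ⟨α, β, γ, H⟩ := Cond_zero hh
  obtain ⟨k, l, x, y, hx0, hx1, hy0, hy1, rfl, -⟩ := floor_dec p
  simp only [H]
  rcases le_total y x with hxy | hxy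
  · rw [S0_lower _ _ _ _ _ hy0 hxy hx1.le]
    push_cast; ring
  · rw [S0_upper _ _ _ _ _ hx0 hxy hy1.le]
    push_cast; ring

def lamZ : Fin 3 → ℤ × ℤ → ℤ := ![fun p => p.2, fun p => p.1, fun p => p.1 - p.2]

def InvC (i : Fin 3) (c : ℤ × ℤ → ℝ) : Prop := ∃ d : ℤ → ℝ, ∀ w, c w = d (lamZ i w)

lemma S0_inv {i : Fin 3} {c : ℤ × ℤ → ℝ} (hc : InvC i c) : ∃ Φ : ℝ → ℝ, ∀ p, S0 c p = Φ (lam i p) := by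
  obtain ⟨d, hd⟩ := hc
  obtain rfl : c = fun w => d (lamZ i w) := funext hd
  obtain rfl | rfl | rfl : i = 0 ∨ i = 1 ∨ i = 2 := by fin_cases i <;> simp
  · refine ⟨fun u => d (⌊u⌋ - 1) * (1 - Int.fract u) + d ⌊u⌋ * Int.fract u, fun p => ?_⟩
    obtain ⟨k, l, x, y, hx0, hx1, hy0, hy1, hp, hk, hl, hx, hy⟩ := floor_dec p
    rw [lam0]; beta_reduce; rw [← hl, ← hy, hp]
    rcases le_total y x with hxy | hxy
    · rw [S0_lower _ _ _ _ _ hy0 hxy hx1.le]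
      simp [lamZ]; ring
    · rw [S0_upper _ _ _ _ _ hx0 hxy hy1.le]
      simp [lamZ]; ring
  · refine ⟨fun u => d (⌊u⌋ - 1) * (1 - Int.fract u) + d ⌊u⌋ * Int.fract u, fun p => ?_⟩
    obtain ⟨k, l, x, y, hx0, hx1, hy0, hy1, hp, hk, hl, hx, hy⟩ := floor_dec p
    rw [lam1]; beta_reduce; rw [← hk, ← hx, hp]
    rcases le_total y x with hxy | hxy
    · rw [S0_lower _ _ _ _ _ hy0 hxy hx1.le]
      simp [lamZ]; ring
    · rw [S0_upper _ _ _ _ _ hx0 hxy hy1.le]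
      simp [lamZ]; ring
  · refine ⟨fun u => d ⌊u⌋ * (1 - (u - ⌊u⌋)) + d (⌊u⌋ + 1) * (u - ⌊u⌋), fun p => ?_⟩
    obtain ⟨k, l, x, y, hx0, hx1, hy0, hy1, hp, hk, hl, hx, hy⟩ := floor_dec p
    rw [lam2, hp]
    rcases le_or_gt y x with hxy | hxy
    · rw [S0_lower _ _ _ _ _ hy0 hxy hx1.le]
      have e : ⌊(k + x) - (l + y)⌋ = k - l := by
        rw [Int.floor_eq_iff]; push_cast; constructor <;> linarith
      simp only [e, lamZ]
      have e1 : k - 1 - (l - 1) = k - l := by ring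
      have e2 : k - (l - 1) = k - l + 1 := by ring
      simp [e1, e2]; ring
    · rw [S0_upper _ _ _ _ _ hx0 hxy.le hy1.le]
      have e : ⌊(k + x) - (l + y)⌋ = k - l - 1 := by
        rw [Int.floor_eq_iff]; push_cast; constructor <;> linarith
      simp only [e, lamZ]
      have e1 : k - 1 - (l - 1) = k - l := by ring
      have e2 : k - 1 - l = k - l - 1 := by ring
      simp [e1, e2]; ring

lemma S_inv {i : Fin 3} {c : ℤ × ℤ → ℝ} (hc : InvC i c) (m : Fin 3 → ℕ) (p : Pt) (t : ℝ) :
    S m c (p - t • eR i) = S m c p := by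
  obtain ⟨Φ, hΦ⟩ := S0_inv hc
  have h : tau (t • eR i) (S0 c) = S0 c := by
    ext p
    rw [tau_apply, hΦ, hΦ, lam_inv]
  have := op_tau m (t • eR i) (S0 c)
  rw [h] at this
  have h2 := congrArg (fun f : C(Pt, ℝ) => f p) this
  exact h2.symm

lemma S_const (m : Fin 3 → ℕ) (K : ℝ) (p : Pt) : S m (fun _ => K) p = K := by
  induction m using ind_m generalizing p with
  | h0 =>
    have := S0_affine (h := C K) (fun i j _ => by simp [DL_apply]) p
    simpa [evalP_C, S, op_zero] using this
  | hs m i ih =>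
    rw [S_succ, II_apply]
    simp [ih]

lemma antid (δ : ℤ → ℝ) : ∃ γ : ℤ → ℝ, ∀ n, γ n - γ (n - 1) = δ n := by
  let γ : ℤ → ℝ := fun n => match n with
    | Int.ofNat n => ∑ k ∈ Finset.range n, δ (k + 1)
    | Int.negSucc n => - ∑ k ∈ Finset.range (n + 1), δ (-k)
  refine ⟨γ, fun n => ?_⟩
  rcases n with n | n
  · rcases n with _ | n
    · change ∑ k ∈ Finset.range 0, δ (k + 1) - (- ∑ k ∈ Finset.range (0 + 1), δ (-k)) = δ 0
      simp
    · have : Int.ofNat (n + 1) - 1 = Int.ofNat n := by simp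
      rw [this]
      change ∑ k ∈ Finset.range (n + 1), δ (k + 1) - ∑ k ∈ Finset.range n, δ (k + 1) = δ (n + 1)
      rw [Finset.sum_range_succ]; ring
  · have : Int.negSucc n - 1 = Int.negSucc (n + 1) := by omega
    rw [this]
    change - ∑ k ∈ Finset.range (n + 1), δ (-k) - (- ∑ k ∈ Finset.range (n + 1 + 1), δ (-k)) = _
    rw [Finset.sum_range_succ _ (n + 1)]
    rw [Int.negSucc_eq]; push_cast; ring

lemma antid' (δ : ℤ → ℝ) : ∃ γ : ℤ → ℝ, ∀ n, γ n - γ (n + 1) = δ n := by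
  obtain ⟨γ, h⟩ := antid (fun n => δ (n - 1))
  refine ⟨fun n => - γ n, fun n => ?_⟩
  have := h (n + 1)
  simp only [add_sub_cancel_right] at this
  linarith

lemma nab_surj (i : Fin 3) (d : ℤ × ℤ → ℝ) : ∃ c, nab i c = d := by
  obtain rfl | rfl | rfl : i = 0 ∨ i = 1 ∨ i = 2 := by fin_cases i <;> simp
  · choose γ h using fun b : ℤ => antid (fun a => d (a, b))
    refine ⟨fun w => γ w.2 w.1, funext fun w => ?_⟩
    simp [nab, dirZ, h]
  · choose γ h using fun b : ℤ => antid (fun a => d (b, a))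
    refine ⟨fun w => γ w.1 w.2, funext fun w => ?_⟩
    simp [nab, dirZ, h]
  · choose γ h using fun b : ℤ => antid (fun a => d (a, a - b))
    refine ⟨fun w => γ (w.1 - w.2) w.1, funext fun w => ?_⟩
    simp [nab, dirZ, h]

lemma lamZ_dir (i j : Fin 3) (hij : j ≠ i) : (∀ w, lamZ i (w - dirZ j) = lamZ i w - 1) ∨
    (∀ w, lamZ i (w - dirZ j) = lamZ i w + 1) := by
  fin_cases i <;> fin_cases j <;> first | exact absurd rfl hij | skip
  · left; intro w; simp [lamZ, dirZ]
  · left; intro w; simp [lamZ, dirZ]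
  · left; intro w; simp [lamZ, dirZ]
  · left; intro w; simp [lamZ, dirZ]
  · left; intro w; simp [lamZ, dirZ]; ring
  · right; intro w; simp [lamZ, dirZ]; ring

lemma nab_inv {i j : Fin 3} (hij : j ≠ i) {d : ℤ × ℤ → ℝ} (hd : InvC i d) :
    ∃ c, InvC i c ∧ nab j c = d := by
  obtain ⟨δ, hδ⟩ := hd
  rcases lamZ_dir i j hij with h | h
  · obtain ⟨γ, hγ⟩ := antid δ
    refine ⟨fun w => γ (lamZ i w), ⟨γ, fun _ => rfl⟩, funext fun w => ?_⟩
    simp only [nab, h, hγ, hδ]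
  · obtain ⟨γ, hγ⟩ := antid' δ
    refine ⟨fun w => γ (lamZ i w), ⟨γ, fun _ => rfl⟩, funext fun w => ?_⟩
    simp only [nab, h, hγ, hδ]

lemma Inv_eval {i : Fin 3} {h : BPoly} (hi : DL i h = 0) :
    InvC i (fun w => evalP h ((w.1 : ℝ) + 1, (w.2 : ℝ) + 1)) := by
  obtain rfl | rfl | rfl : i = 0 ∨ i = 1 ∨ i = 2 := by fin_cases i <;> simp
  · refine ⟨fun n => evalP h (0, (n : ℝ) + 1), fun w => ?_⟩
    simp only [lamZ]
    have := univ_line_const hi (0, (w.2 : ℝ) + 1) ((w.1 : ℝ) + 1)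
    simpa [eR0] using this
  · refine ⟨fun n => evalP h ((n : ℝ) + 1, 0), fun w => ?_⟩
    simp only [lamZ]
    have := univ_line_const hi ((w.1 : ℝ) + 1, 0) ((w.2 : ℝ) + 1)
    simpa [eR1] using this
  · refine ⟨fun n => evalP h ((n : ℝ), 0), fun w => ?_⟩
    have := univ_line_const hi ((w.1 : ℝ) - w.2, 0) ((w.2 : ℝ) + 1)
    have e : (((w.1 : ℝ) - w.2, 0) + ((w.2 : ℝ) + 1) • eR 2 : Pt) = ((w.1 : ℝ) + 1, (w.2 : ℝ) + 1) := by
      ext <;> simp [eR2]; ring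
    rw [e] at this
    simpa [lamZ] using this

lemma prop3 (i : Fin 3) (m : Fin 3 → ℕ) : ∀ h : BPoly, DL i h = 0 → Cond m h →
    ∃ c, InvC i c ∧ ∀ p, S m c p = evalP h p := by
  induction m using ind_m with
  | h0 =>
    intro h hi hh
    exact ⟨_, Inv_eval hi, fun p => by rw [S, op_zero]; exact S0_affine hh p⟩
  | hs m j ih =>
    intro h hi hh
    by_cases hj : j = i
    · subst hj
      have hh' : Cond m h := by
        intro a b hab
        have := hh a b hab
        rw [Pi.add_apply, Pi.add_apply] at this
        by_cases ha : a = j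
        · subst ha
          rw [pow_succ, Module.End.mul_apply, ← pow_comm_app, hi, map_zero, map_zero]
        · by_cases hb : b = j
          · subst hb
            rw [pow_succ (DL b), Module.End.mul_apply, hi, map_zero, map_zero]
          · rwa [Pi.single_eq_of_ne ha, Pi.single_eq_of_ne hb, add_zero, add_zero] at this
      obtain ⟨c, hc, hS⟩ := ih h hi hh'
      refine ⟨c, hc, fun p => ?_⟩
      rw [S_succ, II_apply]
      have : ∀ t : ℝ, S m c (p - t • eR j) = S m c p := fun t => S_inv hc m p t
      simp [this, hS]
    · obtain ⟨d, hd, hS⟩ := ih (DL j h) (by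
        have := pow_comm_app i j 1 h
        rw [pow_one, hi, map_zero] at this
        exact this) (Cond_step hh)
      obtain ⟨c, hc, hcd⟩ := nab_inv hj hd
      generalize hm : m + Pi.single j 1 = m' at *
      have hl : ∀ p, HasLineDerivAt ℝ (S m' c) (S m d p) p (eR j) := by
        intro p
        rw [← hm, ← hcd]; exact S_line m j c p
      have D1 : ∀ p ∈ (univ : Set Pt), HasLineDerivAt ℝ (fun p => S m' c p - evalP h p) 0 p (eR i) := by
        intro p _
        have h1 : HasLineDerivAt ℝ (S m' c) 0 p (eR i) := by
          unfold HasLineDerivAt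
          have : (fun t : ℝ => S m' c (p + t • eR i)) = fun _ => S m' c p := by
            ext t
            have := S_inv hc m' p (-t)
            rwa [neg_smul, sub_neg_eq_add] at this
          rw [this]
          exact hasDerivAt_const _ _
        have := h1.sub' (evalP_line h i p)
        rwa [hi, evalP_zero, sub_zero] at this
      have D2 : ∀ p ∈ (univ : Set Pt), HasLineDerivAt ℝ (fun p => S m' c p - evalP h p) 0 p (eR j) := by
        intro p _
        have := (hl p).sub' (evalP_line h j p)
        rwa [hS, sub_self] at this
      obtain ⟨K, key⟩ : ∃ K : ℝ, ∀ p, S m' c p - evalP h p = K :=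
        ⟨_, fun p => const_of_two isOpen_univ convex_univ hj D1 D2 (mem_univ p) (mem_univ (0 : Pt))⟩
      refine ⟨c - fun _ => K, ?_, fun p => ?_⟩
      · obtain ⟨γ, hγ⟩ := hc
        exact ⟨fun n => γ n - K, fun w => by simp [hγ]⟩
      · rw [S_sub, ContinuousMap.sub_apply, S_const, ← key p]; ring

lemma prop2 (T : Tri) (m : Fin 3 → ℕ) : ∀ q : BPoly, Cond m q →
    ∃ c, EqOn (S m c) (evalP q) T.toSet := by
  induction m using ind_m with
  | h0 =>
    intro q hq
    exact ⟨_, fun p _ => by rw [S, op_zero]; exact S0_affine hq p⟩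
  | hs m i ih =>
    intro q hq
    obtain ⟨d, hd⟩ := ih _ (Cond_step hq)
    obtain ⟨c, rfl⟩ := nab_surj i d
    obtain ⟨g, -, hg⟩ := piece_P _ (m + Pi.single i 1) rfl c T
    have hgi : DL i g = DL i q :=
      poly_ext_open (tri_open T) (tri_ne T) ((piece_DL hg).symm.trans hd)
    obtain ⟨c', -, hc'⟩ := prop3 i (m + Pi.single i 1) (q - g) (by rw [map_sub, hgi, sub_self])
      (Cond_sub hq (piece_D hg))
    refine ⟨c + c', fun p hp => ?_⟩
    rw [S_add, ContinuousMap.add_apply, hc', hg hp, evalP_sub]; ring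


/-! ### Box splines -/

lemma boxN_eq (a b c : ℕ) (p : Pt) : boxN (a + 1) (b + 1) (c + 1) p = op ![a, b, c] hatC p := by
  induction a generalizing p with
  | zero =>
    induction b generalizing p with
    | zero =>
      induction c generalizing p with
      | zero =>
        have : (![0, 0, 0] : Fin 3 → ℕ) = 0 := by ext k; fin_cases k <;> rfl
        rw [this, op_zero]
        simp only [zero_add]
        rw [boxN]
        rfl
      | succ c ih =>
        have : (![0, 0, c + 1] : Fin 3 → ℕ) = ![0, 0, c] + Pi.single 2 1 := by
          ext k; fin_cases k <;> simp
        rw [this, op_succ, II_apply]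
        simp only [← ih]
        simp only [zero_add]
        rw [boxN]
        simp [eR2, Prod.sub_def]
    | succ b ih =>
      have : (![0, b + 1, c] : Fin 3 → ℕ) = ![0, b, c] + Pi.single 1 1 := by
        ext k; fin_cases k <;> simp
      rw [this, op_succ, II_apply]
      simp only [← ih]
      simp only [zero_add]
      rw [boxN]
      simp [eR1, Prod.sub_def]
  | succ a ih =>
    have : (![a + 1, b, c] : Fin 3 → ℕ) = ![a, b, c] + Pi.single 0 1 := by
      ext k; fin_cases k <;> simp
    rw [this, op_succ, II_apply]
    simp only [← ih]
    rw [boxN]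
    simp [eR0, Prod.sub_def]

lemma trBox_eq (a b c : ℕ) (w : ℤ × ℤ) (p : Pt) :
    trBox (a + 1) (b + 1) (c + 1) w p = op ![a, b, c] (hatT w) p := by
  rw [trBox, boxN_eq, hatT, op_tau, tau_apply]
  rfl

lemma VSpace_iff (a b c : ℕ) (T : Tri) (q : BPoly) :
    q ∈ VSpace (a + 1) (b + 1) (c + 1) T ↔ ∃ d, EqOn (S ![a, b, c] d) (evalP q) T.toSet := by
  obtain ⟨R, hR⟩ := tri_bdd T
  obtain ⟨s, hs⟩ := S_loc ![a, b, c] R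
  constructor
  · rintro ⟨d, -, hd⟩
    refine ⟨d, fun p hp => ?_⟩
    classical
    rw [hs (s ∪ d.support) Finset.subset_union_left d p (hR p hp), hd p hp, Finsupp.sum]
    simp only [trBox_eq]
    symm
    apply Finset.sum_subset Finset.subset_union_right
    intro w _ hw
    rw [Finsupp.notMem_support_iff.mp hw, zero_mul]
  · rintro ⟨d, hd⟩
    classical
    let t := s.filter (fun w => w ∈ activeSet (a + 1) (b + 1) (c + 1) T)
    let e : (ℤ × ℤ) →₀ ℝ := Finsupp.onFinset t (fun w => if w ∈ t then d w else 0)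
      (fun w hw => by by_contra h; simp [h] at hw)
    have he : e.support ⊆ t := Finsupp.support_onFinset_subset
    refine ⟨e, fun w hw => (Finset.mem_filter.mp (he hw)).2, fun p hp => ?_⟩
    rw [Finsupp.sum_of_support_subset e he _ (by simp), ← hd hp, hs s subset_rfl d p (hR p hp)]
    have : ∀ w ∈ t, e w * trBox (a + 1) (b + 1) (c + 1) w p = d w * op ![a, b, c] (hatT w) p := by
      intro w hw
      rw [trBox_eq]
      congr 1
      exact if_pos hw
    rw [Finset.sum_congr rfl this]
    symm
    apply Finset.sum_subset (Finset.filter_subset _ _)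
    intro w hw hwt
    have : ¬ w ∈ activeSet (a + 1) (b + 1) (c + 1) T := fun h => hwt (Finset.mem_filter.mpr ⟨hw, h⟩)
    have h0 : ∀ p ∈ T.toSet, trBox (a + 1) (b + 1) (c + 1) w p = 0 := not_not.mp this
    rw [← trBox_eq, h0 p hp, mul_zero]

lemma VSpace_Cond (a b c : ℕ) (T : Tri) (q : BPoly) :
    q ∈ VSpace (a + 1) (b + 1) (c + 1) T ↔ Cond ![a, b, c] q := by
  rw [VSpace_iff]
  exact ⟨fun ⟨_, h⟩ => piece_D h, prop2 T _ q⟩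


/-- For `n = (n₁,n₂,n₃)` with all `nᵢ ≥ 1`, the span of the
restrictions to a triangle of the box spline translates active on it is a
space of polynomials of total degree `≤ n₁+n₂+n₃-2` which is independent of
the chosen triangle. -/
theorem statement1 (n₁ n₂ n₃ : ℕ) (h₁ : 1 ≤ n₁) (h₂ : 1 ≤ n₂) (h₃ : 1 ≤ n₃)
    (T T' : Tri) :
    VSpace n₁ n₂ n₃ T = VSpace n₁ n₂ n₃ T' ∧
    ∀ q ∈ VSpace n₁ n₂ n₃ T, q.totalDegree ≤ n₁ + n₂ + n₃ - 2 := by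
  obtain ⟨a, rfl⟩ := Nat.exists_eq_add_of_le' h₁
  obtain ⟨b, rfl⟩ := Nat.exists_eq_add_of_le' h₂
  obtain ⟨c, rfl⟩ := Nat.exists_eq_add_of_le' h₃
  constructor
  · ext q
    rw [VSpace_Cond, VSpace_Cond]
  · intro q hq
    obtain ⟨d, hd⟩ := (VSpace_iff a b c T q).mp hq
    obtain ⟨r, hr, hr'⟩ := piece_P _ ![a, b, c] rfl d T
    have : q = r := poly_ext_open (tri_open T) (tri_ne T) (hd.symm.trans hr')
    subst this
    apply hr.trans
    simp only [sm, Matrix.cons_val]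
    omega

end
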